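/- Let φ_{N,k}(x) = e^{-x} Σ_{n=0}^N (-1)^n ℓ_{n,k} x^n/n! for N ≥ 0. Then the Lindelöf Hypothesis holds if and only if, for every positive integer k, the functions φ_{N,k} converge to φ_k in L²(0,∞) as N → ∞. -/

import Mathlib

open scoped Real Topology
open Complex Filter MeasureTheory Finset Asymptotics

/-- The analytic extension of `s ↦ ((s-1) * ζ(s))^k` to `s = 1` (where its value is `1`). -/
noncomputable def zetaPowAux (k : ℕ) : ℂ → ℂ :=
  Function.update (fun s : ℂ => ((s - 1) * riemannZeta s) ^ k) 1 1

/-- `lam k j` is the Taylor coefficient `λ_{j,k}`, i.e. the `j`-th derivative at `s = 1` of the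
analytic extension of `(s-1)^k ζ(s)^k`; these numbers are real, and we record their real part. -/
noncomputable def lam (k j : ℕ) : ℝ :=
  (iteratedDeriv j (zetaPowAux k) 1).re

/-- The Fourier coefficients `ℓ_{n,k}` for `n ≥ -k` (an integer index). -/
noncomputable def ell (k : ℕ) (n : ℤ) : ℝ :=
  if 1 ≤ n then
    (-1 : ℝ) ^ n.toNat *
      ∑ j ∈ Finset.Icc 1 n.toNat,
        ((n.toNat - 1).choose (j - 1) : ℝ) * lam k (j + k) / (Nat.factorial (j + k))
  else
    (-1 : ℝ) ^ k *
      ∑ j ∈ Finset.range ((k + n).toNat + 1),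
        ((k - j).choose (-n).toNat : ℝ) * (-1 : ℝ) ^ j * lam k j / (Nat.factorial j)

/-- The Lindelöf Hypothesis: `ζ(1/2 + it) = O(|t|^ε)` for every `ε > 0`. -/
def LindelofHypothesis : Prop :=
  ∀ ε : ℝ, 0 < ε → ∃ C : ℝ, ∀ t : ℝ, 1 ≤ |t| →
    ‖riemannZeta (1 / 2 + t * Complex.I)‖ ≤ C * |t| ^ ε

/-- `dk k n` is the Piltz divisor function `d_k(n)`: the number of representations of `n` as an
ordered product of `k` positive integers (the `k`-th Dirichlet-convolution power of `ζ`). -/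
noncomputable def dk (k n : ℕ) : ℕ := (ArithmeticFunction.zeta ^ k) n

/-- The coefficients `a_{j,k}` of the polynomial `P_k`. -/
noncomputable def aCoef (k j : ℕ) : ℝ :=
  (-1 : ℝ) ^ (k - 1 - j) *
    ∑ i ∈ Finset.range (k - 1 - j + 1), (-1 : ℝ) ^ i * lam k i / (Nat.factorial i)

/-- The error term `Δ_k(x) = (Σ_{1 ≤ n ≤ x} d_k(n)) - x P_k(log x)` in the Piltz divisor
problem. -/
noncomputable def Deltak (k : ℕ) (x : ℝ) : ℝ :=
  (∑ n ∈ Finset.Icc 1 ⌊x⌋₊, (dk k n : ℝ)) -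
    x * ∑ j ∈ Finset.range k, aCoef k j / (Nat.factorial j) * (Real.log x) ^ j

/-- The `n`-th Laguerre polynomial. -/
noncomputable def laguerre (n : ℕ) (u : ℝ) : ℝ :=
  ∑ j ∈ Finset.range (n + 1), (n.choose j : ℝ) * (-1 : ℝ) ^ j * u ^ j / (Nat.factorial j)

/-- The Bessel function of the first kind of order `0`. -/
noncomputable def besselJ0 (u : ℝ) : ℝ :=
  ∑' m : ℕ, (-1 : ℝ) ^ m * (u / 2) ^ (2 * m) / ((Nat.factorial m : ℝ) ^ 2)

/-- `φ_k(x) = ∫_1^∞ Δ_k(r) J₀(2 √(x log r)) r⁻² dr`. -/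
noncomputable def phik (k : ℕ) (x : ℝ) : ℝ :=
  ∫ r in Set.Ioi (1 : ℝ), Deltak k r * besselJ0 (2 * Real.sqrt (x * Real.log r)) / r ^ 2

/-!
The functions `L_n(log r) / r` are orthonormal in `L²(1, ∞)`. Removing from `ζ(s)^k` the polar part
coming from the main term `x P_k(log x)` leaves a power series in `(1 - s) / s` whose coefficients
are the `ℓ_{n,k}`. Comparing moments against powers of `1 / r` shows that, once `∑ ℓ_{n,k}² < ∞`,
the `(-1)^n ℓ_{n,k}` are the coefficients of `Δ_k(r) / r` in that orthonormal system. Since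
`∑ L_n(u) x^n / n! = e^x J₀(2√(xu))`, integrating `Δ_k(r) / r` against this expansion with
`u = log r` writes `φ_k(x)` as the mean of `(-1)^n ℓ_{n,k}` under the Poisson law of parameter `x`.

If LH holds, Phragmén–Lindelöf carries its bound into the half-plane `1/2 < re s`, which
`w = (s - 1) / s` maps onto the unit disc; there Parseval gives `∑ ℓ_{n,k}² < ∞`. The Poisson
weights sum to `1` over `n` and integrate to `1` over `(0, ∞)`, so by Cauchy–Schwarz the squared
`L²` distance from `φ_k` to `φ_{N,k}` is at most the tail `∑_{n > N} ℓ_{n,k}²`.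

Conversely, `L²` convergence bounds the `L²` norms of the differences `φ_{N+1,k} - φ_{N,k}`, so
`ℓ_{n,k}` grows at most linearly in `n`. Summing the power series at distance `1 / (2|t|)` from the
critical line bounds `|ζ|^k` by a power of `|t|` whose exponent does not depend on `k`, and LH
follows on letting `k → ∞`.
-/

/-! ### The Mellin transform of the fractional part -/

/-- The Mellin-type transform `∫_1^∞ {t} t^{-s-1} dt` of the fractional part, which continues
`ζ` to the half-plane `0 < re s` through `(s - 1) ζ(s) = s (1 - (s - 1) fractMellin s)`. -/
noncomputable def fractMellin (s : ℂ) : ℂ :=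
  ∫ t in Set.Ioi (1 : ℝ), ((Int.fract t : ℝ) : ℂ) * (t : ℂ) ^ (-(s + 1))

theorem norm_ofReal_fract_le_one (t : ℝ) : ‖((Int.fract t : ℝ) : ℂ)‖ ≤ 1 := by
  rw [norm_real, Real.norm_of_nonneg (Int.fract_nonneg t)]
  exact (Int.fract_lt_one t).le

theorem norm_fract_mul_cpow_le (s : ℂ) {t : ℝ} (ht : 0 < t) :
    ‖((Int.fract t : ℝ) : ℂ) * (t : ℂ) ^ (-(s + 1))‖ ≤ t ^ (-(s.re + 1)) := by
  rw [norm_mul, norm_cpow_eq_rpow_re_of_pos ht, neg_re, add_re, one_re]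
  exact mul_le_of_le_one_left (by positivity) (norm_ofReal_fract_le_one t)

theorem norm_fractMellin_le {s : ℂ} (hs : 0 < s.re) : ‖fractMellin s‖ ≤ 1 / s.re := by
  have hexp : -(s.re + 1) < -1 := by linarith
  have hint : ∫ t in Set.Ioi (1 : ℝ), t ^ (-(s.re + 1)) = 1 / s.re := by
    rw [integral_Ioi_rpow_of_lt hexp one_pos]
    simp [neg_div_neg_eq]
  rw [← hint]
  refine norm_integral_le_of_norm_le (integrableOn_Ioi_rpow_of_lt hexp one_pos) ?_
  filter_upwards [ae_restrict_mem measurableSet_Ioi] with t ht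
  exact norm_fract_mul_cpow_le s (one_pos.trans ht)

theorem integrableOn_fract_mul_cpow {s : ℂ} (hs : 0 < s.re) :
    IntegrableOn (fun t : ℝ => ((Int.fract t : ℝ) : ℂ) * (t : ℂ) ^ (-(s + 1))) (Set.Ioi 1) := by
  refine (integrableOn_Ioi_rpow_of_lt (a := -(s.re + 1)) (by linarith) one_pos).mono' ?_ ?_
  · refine (measurable_ofReal.comp measurable_fract).aestronglyMeasurable.mul
      (ContinuousOn.aestronglyMeasurable (fun t ht => ?_) measurableSet_Ioi)
    exact (continuousAt_ofReal_cpow_const t _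
      (Or.inr (one_pos.trans ht).ne')).continuousWithinAt
  · filter_upwards [ae_restrict_mem measurableSet_Ioi] with t ht
    exact norm_fract_mul_cpow_le s (one_pos.trans ht)

theorem fractMellin_eq_mellin (s : ℂ) :
    fractMellin s = mellin ((Set.Ioi (1 : ℝ)).indicator fun t => ((Int.fract t : ℝ) : ℂ)) (-s) := by
  have hind (t : ℝ) :
      (t : ℂ) ^ (-s - 1) • (Set.Ioi (1 : ℝ)).indicator (fun t => ((Int.fract t : ℝ) : ℂ)) t =
        (Set.Ioi 1).indicator (fun t : ℝ => ((Int.fract t : ℝ) : ℂ) * (t : ℂ) ^ (-(s + 1))) t := by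
    by_cases ht : t ∈ Set.Ioi (1 : ℝ)
    · rw [Set.indicator_of_mem ht, Set.indicator_of_mem ht, smul_eq_mul, mul_comm, neg_add']
    · rw [Set.indicator_of_notMem ht, Set.indicator_of_notMem ht, smul_zero]
  simp_rw [mellin, hind]
  rw [setIntegral_indicator measurableSet_Ioi, Set.inter_eq_right.mpr, fractMellin]
  exact Set.Ioi_subset_Ioi zero_le_one

theorem differentiableAt_fractMellin {s : ℂ} (hs : 0 < s.re) :
    DifferentiableAt ℂ fractMellin s := by
  set f : ℝ → ℂ := (Set.Ioi (1 : ℝ)).indicator fun t => ((Int.fract t : ℝ) : ℂ) with hf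
  have hmeas : Measurable f :=
    (measurable_ofReal.comp measurable_fract).indicator measurableSet_Ioi
  have hbound (t : ℝ) : ‖f t‖ ≤ 1 :=
    (norm_indicator_le_norm_self _ _).trans (norm_ofReal_fract_le_one t)
  have hloc : LocallyIntegrable f :=
    (locallyIntegrable_const (1 : ℝ)).mono hmeas.aestronglyMeasurable
      (.of_forall fun t => by simpa using hbound t)
  have htop : f =O[atTop] fun t : ℝ => t ^ (-0 : ℝ) :=
    .of_bound 1 (.of_forall fun t => by simpa using hbound t)
  have hzero : f =O[𝓝[>] 0] fun t : ℝ => t ^ (-(-s.re - 1)) := by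
    refine .of_bound 1 ?_
    filter_upwards [Ioo_mem_nhdsGT one_pos] with t ht
    rw [hf, Set.indicator_of_notMem (by simpa using ht.2.le), norm_zero]
    positivity
  rw [funext fractMellin_eq_mellin]
  have hmellin : DifferentiableAt ℂ (mellin f) (-s) :=
    mellin_differentiableAt_of_isBigO_rpow (hloc.locallyIntegrableOn _) htop (by simpa using hs)
      hzero (by simp)
  exact hmellin.comp s differentiableAt_id.neg

theorem integral_floor_mul_cpow {s : ℂ} (hs : 1 < s.re) :
    ∫ t in Set.Ioi (1 : ℝ), (⌊t⌋₊ : ℂ) * (t : ℂ) ^ (-(s + 1)) = 1 / (s - 1) - fractMellin s := by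
  have hre : (-s).re < -1 := by simpa using hs
  have hpow : ∫ t : ℝ in Set.Ioi 1, (t : ℂ) ^ (-s) = 1 / (s - 1) := by
    rw [integral_Ioi_cpow_of_lt hre one_pos, ofReal_one, one_cpow, ← neg_div_neg_eq]
    ring_nf
  rw [← hpow, fractMellin, ← integral_sub (integrableOn_Ioi_cpow_of_lt hre one_pos)
    (integrableOn_fract_mul_cpow (by linarith))]
  refine setIntegral_congr_fun measurableSet_Ioi fun t ht => ?_
  have ht0 : (0 : ℝ) < t := one_pos.trans ht
  have hsplit : (t : ℂ) ^ (-s) = t * (t : ℂ) ^ (-(s + 1)) := by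
    rw [show -s = 1 + -(s + 1) by ring, cpow_add _ _ (ofReal_ne_zero.mpr ht0.ne'), cpow_one]
  have hfloor : (⌊t⌋₊ : ℂ) = t - ((Int.fract t : ℝ) : ℂ) := by
    rw [Int.fract, ← natCast_floor_eq_intCast_floor ht0.le]
    push_cast
    ring
  simp only [hsplit, hfloor]
  ring

theorem riemannZeta₁_eq_of_one_lt_re {s : ℂ} (hs : 1 < s.re) :
    riemannZeta₁ s = s * (1 - (s - 1) * fractMellin s) := by
  have hs1 : s ≠ 1 := by
    rintro rfl
    simp at hs
  have hs1' : s - 1 ≠ 0 := sub_ne_zero.mpr hs1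
  have hzeta : riemannZeta s = s * (1 / (s - 1) - fractMellin s) := by
    rw [← LSeries_one_eq_riemannZeta hs, ← integral_floor_mul_cpow hs]
    convert LSeries_eq_mul_integral 1 zero_le_one hs (LSeriesSummable_one_iff.mpr hs)
      (.of_bound 1 (.of_forall fun n => by simp)) using 5 with t
    simp
  have hζ₁ := riemannZeta_eq_inv_sub_mul hs1
  rw [hzeta] at hζ₁
  field_simp at hζ₁
  exact hζ₁.symm

theorem riemannZeta₁_eq_of_re_pos {s : ℂ} (hs : 0 < s.re) :
    riemannZeta₁ s = s * (1 - (s - 1) * fractMellin s) := by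
  have hopen : IsOpen {z : ℂ | 0 < z.re} := isOpen_lt continuous_const continuous_re
  have hleft : AnalyticOnNhd ℂ riemannZeta₁ {z : ℂ | 0 < z.re} :=
    differentiable_riemannZeta₁.differentiableOn.analyticOnNhd hopen
  have hright :
      AnalyticOnNhd ℂ (fun s => s * (1 - (s - 1) * fractMellin s)) {z : ℂ | 0 < z.re} := by
    refine DifferentiableOn.analyticOnNhd (fun z hz => ?_) hopen
    have := differentiableAt_fractMellin hz
    exact DifferentiableAt.differentiableWithinAt (by fun_prop)
  refine hleft.eqOn_of_preconnected_of_eventuallyEq hright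
    (convex_halfSpace_re_gt 0).isPreconnected (z₀ := 2) (by simp) ?_ hs
  filter_upwards [(isOpen_lt continuous_const continuous_re).mem_nhds
    (show (2 : ℂ) ∈ {z : ℂ | 1 < z.re} by simp)] with z hz using riemannZeta₁_eq_of_one_lt_re hz

theorem norm_riemannZeta₁_le {s : ℂ} (hs : 0 < s.re) :
    ‖riemannZeta₁ s‖ ≤ ‖s‖ * (1 + ‖s - 1‖ / s.re) := by
  rw [riemannZeta₁_eq_of_re_pos hs, norm_mul, div_eq_mul_one_div]
  gcongr
  refine (norm_sub_le _ _).trans ?_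
  rw [norm_one, norm_mul]
  gcongr
  exact norm_fractMellin_le hs

/-! ### Phragmén–Lindelöf and the Lindelöf Hypothesis -/

theorem norm_le_of_norm_le_on_vertical_line {E : Type*} [NormedAddCommGroup E] [NormedSpace ℂ E]
    {f : ℂ → E} {a A C : ℝ} (hf : DiffContOnCl ℂ f {s | a < s.re})
    (hgrowth : ∀ s : ℂ, a < s.re → ‖f s‖ ≤ A * (1 + |s.im|))
    (hline : ∀ s : ℂ, s.re = a → ‖f s‖ ≤ C) {s : ℂ} (hs : a ≤ s.re) : ‖f s‖ ≤ C := by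
  have hA : 0 ≤ A := by simpa using (norm_nonneg _).trans (hgrowth (a + 1 : ℝ) (by simp))
  have hshift : DiffContOnCl ℂ (fun z => f (z + a)) {z | 0 < z.re} :=
    hf.comp ((differentiable_id.add_const (a : ℂ)).diffContOnCl) fun z hz => by simpa using hz
  have hbound (z : ℂ) (hz : 0 ≤ z.re) : ‖f (z + a)‖ ≤ C := by
    refine PhragmenLindelof.right_half_plane_of_bounded_on_real (f := fun z => f (z + a))
      hshift ⟨1, one_lt_two, 1, .of_bound A (mem_inf_of_right fun w hw => ?_)⟩
      ⟨A, ?_⟩ (fun y => hline _ (by simp)) hz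
    · have hw : 0 < w.re := hw
      calc ‖f (w + a)‖ ≤ A * (1 + |w.im|) := by simpa using hgrowth (w + a) (by simpa using hw)
        _ ≤ A * (‖w‖ + 1) := by
            gcongr A * ?_
            linarith [abs_im_le_norm w]
        _ ≤ A * ‖Real.exp (1 * ‖w‖ ^ (1 : ℝ))‖ := by
            rw [Real.norm_of_nonneg (Real.exp_pos _).le, one_mul, Real.rpow_one]
            gcongr
            exact Real.add_one_le_exp _
    · rw [eventually_map]
      filter_upwards [eventually_gt_atTop 0] with x hx
      simpa using hgrowth (x + a) (by simpa using hx)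
  simpa using hbound (s - a) (by simpa using hs)

theorem norm_riemannZeta₁_mul_cpow_le {s : ℂ} {ε : ℝ} (hε : 0 ≤ ε) (hs : 1 / 2 ≤ s.re) :
    ‖riemannZeta₁ s * s ^ (-(1 + ε) : ℂ)‖ ≤ 2 * 2 ^ ε * (1 + |s.im|) := by
  have hre : 0 < s.re := by linarith
  have hhalf : 1 / 2 ≤ ‖s‖ := hs.trans (re_le_norm s)
  have hpos : 0 < ‖s‖ := by linarith
  have hquot : ‖s - 1‖ / s.re ≤ 1 + 2 * |s.im| := by
    rw [div_le_iff₀ hre]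
    have htri : ‖s - 1‖ ≤ |s.re - 1| + |s.im| := by simpa using norm_le_abs_re_add_abs_im (s - 1)
    have hre1 : |s.re - 1| ≤ s.re := abs_le.mpr ⟨by linarith, by linarith⟩
    nlinarith [abs_nonneg s.im]
  calc ‖riemannZeta₁ s * s ^ (-(1 + ε) : ℂ)‖
      = ‖riemannZeta₁ s‖ * ‖s‖ ^ (-(1 + ε)) := by
        rw [norm_mul, ← norm_cpow_real]
        push_cast
        rfl
    _ ≤ ‖s‖ * (1 + (1 + 2 * |s.im|)) * ‖s‖ ^ (-(1 + ε)) := by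
        gcongr
        exact (norm_riemannZeta₁_le hre).trans (by gcongr)
    _ = 2 * ‖s‖ ^ (-ε) * (1 + |s.im|) := by
        rw [show -ε = 1 + -(1 + ε) by ring, Real.rpow_add hpos, Real.rpow_one]
        ring
    _ ≤ 2 * (1 / 2) ^ (-ε) * (1 + |s.im|) := by
        gcongr 2 * ?_ * _
        exact Real.rpow_le_rpow_of_nonpos (by norm_num) hhalf (by linarith)
    _ = 2 * 2 ^ ε * (1 + |s.im|) := by
        rw [one_div, Real.inv_rpow zero_le_two, Real.rpow_neg zero_le_two, inv_inv]

theorem norm_sub_one_of_re_eq_half {s : ℂ} (hs : s.re = 1 / 2) : ‖s - 1‖ = ‖s‖ := by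
  rw [norm_def, norm_def, normSq_apply, normSq_apply, sub_re, sub_im, hs]
  norm_num

theorem LindelofHypothesis.exists_norm_riemannZeta₁_mul_cpow_le (h : LindelofHypothesis) {ε : ℝ}
    (hε : 0 < ε) :
    ∃ K : ℝ, ∀ s : ℂ, s.re = 1 / 2 → ‖riemannZeta₁ s * s ^ (-(1 + ε) : ℂ)‖ ≤ K := by
  obtain ⟨C, hC⟩ := h ε hε
  refine ⟨max C (2 * 2 ^ ε * (1 + 1)), fun s hs => ?_⟩
  have hpos : 0 < ‖s‖ := norm_pos_iff.mpr fun h0 => by norm_num [h0] at hs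
  rcases le_total 1 |s.im| with him | him
  · have hs1 : s ≠ 1 := fun h1 => by norm_num [h1] at hs
    have hζ : ‖riemannZeta s‖ ≤ max C (2 * 2 ^ ε * (1 + 1)) * ‖s‖ ^ ε := by
      have hline : (1 / 2 : ℂ) + s.im * I = s := by apply Complex.ext <;> simp [hs]
      rw [← hline] at hpos ⊢
      refine (hC _ him).trans ?_
      rw [hline]
      gcongr
      exacts [le_max_left _ _, abs_im_le_norm s]
    calc ‖riemannZeta₁ s * s ^ (-(1 + ε) : ℂ)‖
        = ‖s‖ * ‖riemannZeta s‖ * ‖s‖ ^ (-(1 + ε)) := by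
          rw [riemannZeta_eq_inv_sub_mul hs1, norm_mul, norm_mul, norm_inv,
            norm_sub_one_of_re_eq_half hs, mul_inv_cancel_left₀ hpos.ne', ← norm_cpow_real]
          push_cast
          rfl
      _ ≤ ‖s‖ * (max C (2 * 2 ^ ε * (1 + 1)) * ‖s‖ ^ ε) * ‖s‖ ^ (-(1 + ε)) := by gcongr
      _ = max C (2 * 2 ^ ε * (1 + 1)) := by
          rw [Real.rpow_neg hpos.le, Real.rpow_add hpos, Real.rpow_one]
          field_simp
  · refine (norm_riemannZeta₁_mul_cpow_le hε.le hs.ge).trans (le_max_of_le_right ?_)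
    gcongr

theorem LindelofHypothesis.exists_norm_riemannZeta₁_le (h : LindelofHypothesis) {ε : ℝ}
    (hε : 0 < ε) :
    ∃ C : ℝ, ∀ s : ℂ, 1 / 2 ≤ s.re → ‖riemannZeta₁ s‖ ≤ C * ‖s‖ ^ (1 + ε) := by
  obtain ⟨K, hK⟩ := h.exists_norm_riemannZeta₁_mul_cpow_le hε
  have hdiff : DiffContOnCl ℂ (fun s : ℂ => riemannZeta₁ s * s ^ (-(1 + ε) : ℂ))
      {s | 1 / 2 < s.re} := by
    refine DifferentiableOn.diffContOnCl fun s hs => ?_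
    rw [closure_setOfPred_lt_re] at hs
    have hslit : s ∈ slitPlane := Or.inl (one_half_pos.trans_le hs)
    exact (differentiable_riemannZeta₁.differentiableAt.mul
      (differentiableAt_id.cpow_const hslit)).differentiableWithinAt
  refine ⟨K, fun s hs => ?_⟩
  have hpos : 0 < ‖s‖ := by linarith [re_le_norm s]
  have hbound := norm_le_of_norm_le_on_vertical_line hdiff
    (fun s hs => norm_riemannZeta₁_mul_cpow_le hε.le (le_of_lt hs)) hK hs
  have hcast : (-(1 + ε) : ℂ) = ((-(1 + ε) : ℝ) : ℂ) := by push_cast; rfl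
  rwa [norm_mul, hcast, norm_cpow_real, Real.rpow_neg hpos.le, ← div_eq_mul_inv,
    div_le_iff₀ (by positivity)] at hbound

/-! ### Taylor coefficients at `s = 1` and the expansion in powers of `(1 - s) / s` -/

open scoped ComplexConjugate

theorem iteratedDeriv_conj {f : ℂ → ℂ} (hf : ∀ z, f (conj z) = conj (f z)) (n : ℕ) (z : ℂ) :
    iteratedDeriv n f (conj z) = conj (iteratedDeriv n f z) := by
  induction n generalizing z with
  | zero => simpa using hf z
  | succ n ih =>
    have hinv : conj ∘ iteratedDeriv n f ∘ conj = iteratedDeriv n f := by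
      funext w
      simp [ih]
    have hderiv := congrFun (deriv_conj_conj (f := iteratedDeriv n f)) (conj z)
    rw [hinv] at hderiv
    simpa [iteratedDeriv_succ] using hderiv

theorem zetaPowAux_eq (k : ℕ) : zetaPowAux k = fun s => riemannZeta₁ s ^ k := by
  funext s
  by_cases hs : s = 1
  · simp [zetaPowAux, hs]
  · rw [zetaPowAux, Function.update_of_ne hs, riemannZeta_eq_inv_sub_mul hs,
      mul_inv_cancel_left₀ (sub_ne_zero.mpr hs)]

theorem zetaPowAux_conj (k : ℕ) (s : ℂ) : zetaPowAux k (conj s) = conj (zetaPowAux k s) := by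
  by_cases hs : s = 1
  · simp [zetaPowAux, hs]
  · have hs' : conj s ≠ 1 := fun h => hs (by simpa using congrArg conj h)
    simp [zetaPowAux, Function.update_of_ne hs, Function.update_of_ne hs', riemannZeta_conj]

theorem ofReal_lam (k j : ℕ) : (lam k j : ℂ) = iteratedDeriv j (zetaPowAux k) 1 := by
  have h := iteratedDeriv_conj (zetaPowAux_conj k) j 1
  rw [map_one] at h
  exact conj_eq_iff_re.mp h.symm

/-- The Taylor coefficient `λ_{j,k} / j!` of `(s - 1)^k ζ(s)^k` at `s = 1`. -/
noncomputable def taylorCoef (k j : ℕ) : ℝ := lam k j / j.factorial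

theorem hasSum_taylorCoef (k : ℕ) (s : ℂ) :
    HasSum (fun j => (taylorCoef k j : ℂ) * (s - 1) ^ j) (riemannZeta₁ s ^ k) := by
  have hd : Differentiable ℂ (zetaPowAux k) := by
    rw [zetaPowAux_eq]
    fun_prop
  have h := hasSum_taylorSeries_of_entire hd 1 s
  simp_rw [← ofReal_lam, zetaPowAux_eq, smul_eq_mul] at h
  convert! h using 2 with j
  rw [taylorCoef]
  push_cast
  ring

theorem summable_abs_taylorCoef_mul_pow (k : ℕ) {r : ℝ} (hr : 0 ≤ r) :
    Summable fun j => |taylorCoef k j| * r ^ j := by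
  have h := (hasSum_taylorCoef k (1 + r)).summable.norm
  simpa [abs_of_nonneg hr] using h

section EulerTransform

variable {𝕜 : Type*} [NormedField 𝕜] {u : 𝕜}

theorem hasSum_choose_mul_pow_of_norm_lt_one (i : ℕ) (hu : ‖u‖ < 1) :
    HasSum (fun p : ℕ => ((p + i).choose i : 𝕜) * u ^ (p + i + 1)) ((u / (1 - u)) ^ (i + 1)) := by
  convert! (hasSum_choose_mul_geometric_of_norm_lt_one i hu).mul_left (u ^ (i + 1)) using 1
  · funext p
    ring
  · rw [div_pow, mul_one_div]

theorem hasSum_euler_transform [CompleteSpace 𝕜] {c : ℕ → 𝕜} (hu : ‖u‖ < 1)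
    (hc : Summable fun j => ‖c j‖ * (‖u‖ / (1 - ‖u‖)) ^ (j + 1)) :
    HasSum (fun n : ℕ => (∑ i ∈ range (n + 1), (n.choose i : 𝕜) * c i) * u ^ (n + 1))
      (∑' j, c j * (u / (1 - u)) ^ (j + 1)) := by
  set F : ℕ × ℕ → 𝕜 := fun x => c x.1 * (((x.2 + x.1).choose x.1 : 𝕜) * u ^ (x.2 + x.1 + 1))
    with hF
  have hrow (i : ℕ) : HasSum (fun p => F (i, p)) (c i * (u / (1 - u)) ^ (i + 1)) :=
    (hasSum_choose_mul_pow_of_norm_lt_one i hu).mul_left (c i)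
  have hdom (i : ℕ) : HasSum (fun p : ℕ => ‖c i‖ * (((p + i).choose i : ℝ) * ‖u‖ ^ (p + i + 1)))
      (‖c i‖ * (‖u‖ / (1 - ‖u‖)) ^ (i + 1)) :=
    (hasSum_choose_mul_pow_of_norm_lt_one i (by simpa using hu)).mul_left ‖c i‖
  have hsum : Summable F := by
    refine Summable.of_norm_bounded (g := fun x : ℕ × ℕ =>
      ‖c x.1‖ * (((x.2 + x.1).choose x.1 : ℝ) * ‖u‖ ^ (x.2 + x.1 + 1)))
      ((summable_prod_of_nonneg fun x => by positivity).mpr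
        ⟨fun i => (hdom i).summable, by simpa only [(hdom _).tsum_eq] using hc⟩) fun x => ?_
    rw [hF, norm_mul, norm_mul, norm_pow]
    gcongr
    simpa using Nat.norm_cast_le (α := 𝕜) ((x.2 + x.1).choose x.1)
  have hdiag := hsum.hasSum
  rw [← (hsum.hasSum.prod_fiberwise hrow).tsum_eq,
    ← HasAntidiagonal.sigmaAntidiagonalEquivProd.hasSum_iff] at hdiag
  convert! hdiag.sigma fun n => hasSum_fintype _ using 1
  funext n
  simp only [Function.comp_def, HasAntidiagonal.sigmaAntidiagonalEquivProd_apply]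
  rw [Finset.sum_coe_sort (antidiagonal n) F, Nat.sum_antidiagonal_eq_sum_range_succ_mk, sum_mul]
  refine sum_congr rfl fun i hi => ?_
  rw [hF]
  simp only [Nat.sub_add_cancel (mem_range_succ_iff.mp hi)]
  ring

end EulerTransform

theorem one_add_mul_sum_alternating {R : Type*} [CommRing R] (c : ℕ → R) (x : R) (n : ℕ) :
    (1 + x) * ∑ m ∈ range (n + 1), ((-1) ^ m * ∑ i ∈ range (m + 1), (-1) ^ i * c i) * x ^ m =
      ∑ m ∈ range (n + 1), c m * x ^ m +
        ((-1) ^ n * ∑ i ∈ range (n + 1), (-1) ^ i * c i) * x ^ (n + 1) := by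
  induction n with
  | zero =>
    simp only [zero_add, sum_range_one, pow_zero]
    ring
  | succ n ih =>
    rw [sum_range_succ, mul_add, ih, sum_range_succ (fun m => c m * x ^ m) (n + 1),
      sum_range_succ (fun i => (-1) ^ i * c i) (n + 1)]
    have hsign : (-1 : R) ^ (n + 1) * (-1) ^ (n + 1) = 1 := by rw [← mul_pow]; simp
    linear_combination (c (n + 1) * x ^ (n + 1)) * hsign

/-- The term `s Σ_{j<k} a_{j,k} (s-1)^{-(j+1)}` by which the Mellin transform of the main term
`x P_k(log x)` contributes to `ζ(s)^k`; it cancels the pole of `ζ(s)^k` at `s = 1`. -/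
noncomputable def polarPart (k : ℕ) (s : ℂ) : ℂ :=
  s * ∑ j ∈ range k, (aCoef k j : ℂ) / (s - 1) ^ (j + 1)

theorem norm_polarPart_le (k : ℕ) {s : ℂ} {d : ℝ} (hd : 0 < d) (hs : d ≤ ‖s - 1‖) :
    ‖polarPart k s‖ ≤ ‖s‖ / ‖s - 1‖ * ∑ j ∈ range k, |aCoef k j| / d ^ j := by
  rw [polarPart, norm_mul, div_mul_eq_mul_div, mul_div_assoc, sum_div]
  gcongr
  refine norm_sum_le_of_le _ fun j _ => ?_
  rw [norm_div, norm_pow, norm_real, Real.norm_eq_abs, pow_succ, ← div_div]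
  gcongr

theorem aCoef_eq (k j : ℕ) : aCoef k j =
    (-1) ^ (k - 1 - j) * ∑ i ∈ range (k - 1 - j + 1), (-1) ^ i * taylorCoef k i := by
  simp only [aCoef, taylorCoef, mul_div_assoc]

theorem polarPart_eq {k : ℕ} (hk : 0 < k) {s : ℂ} (hs : s ≠ 1) :
    polarPart k s =
      (∑ m ∈ range k, (taylorCoef k m : ℂ) * (s - 1) ^ m) / (s - 1) ^ k + aCoef k 0 := by
  obtain ⟨n, rfl⟩ : ∃ n, k = n + 1 := ⟨k - 1, by omega⟩
  have hs' : s - 1 ≠ 0 := sub_ne_zero.mpr hs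
  have hreflect : ∑ j ∈ range (n + 1), (aCoef (n + 1) j : ℂ) / (s - 1) ^ (j + 1) =
      (∑ m ∈ range (n + 1), (aCoef (n + 1) (n - m) : ℂ) * (s - 1) ^ m) / (s - 1) ^ (n + 1) := by
    rw [← sum_range_reflect, sum_div]
    refine sum_congr rfl fun m hm => ?_
    have hm' : m ≤ n := mem_range_succ_iff.mp hm
    rw [div_eq_div_iff (pow_ne_zero _ hs') (pow_ne_zero _ hs'), mul_assoc, ← pow_add]
    congr 2
    omega
  have hcoef (m : ℕ) (hm : m ∈ range (n + 1)) : (aCoef (n + 1) (n - m) : ℂ) =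
      (-1) ^ m * ∑ i ∈ range (m + 1), (-1) ^ i * (taylorCoef (n + 1) i : ℂ) := by
    rw [aCoef_eq, show n + 1 - 1 - (n - m) = m by have := mem_range_succ_iff.mp hm; omega]
    push_cast
    rfl
  have halt := one_add_mul_sum_alternating (fun i => (taylorCoef (n + 1) i : ℂ)) (s - 1) n
  rw [add_sub_cancel, ← hcoef n (self_mem_range_succ n), Nat.sub_self] at halt
  rw [polarPart, hreflect, sum_congr rfl fun m hm => by rw [hcoef m hm], ← mul_div_assoc, halt,
    add_div, mul_div_cancel_right₀ _ (pow_ne_zero _ hs')]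

theorem ell_zero {k : ℕ} (hk : 0 < k) : ell k 0 = taylorCoef k k - aCoef k 0 := by
  obtain ⟨n, rfl⟩ : ∃ n, k = n + 1 := ⟨k - 1, by omega⟩
  have hsign : (-1 : ℝ) ^ (n + 1) * (-1) ^ (n + 1) = 1 := by rw [← mul_pow]; simp
  have hell : ell (n + 1) 0 =
      (-1) ^ (n + 1) * ∑ i ∈ range (n + 1 + 1), (-1) ^ i * taylorCoef (n + 1) i := by
    rw [ell, if_neg (by norm_num), show (((n + 1 : ℕ) : ℤ) + 0).toNat = n + 1 by omega]
    simp only [neg_zero, Int.toNat_zero, Nat.choose_zero_right, Nat.cast_one, one_mul, taylorCoef,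
      mul_div_assoc]
  rw [hell, aCoef_eq, Nat.sub_zero, Nat.add_sub_cancel, sum_range_succ]
  linear_combination taylorCoef (n + 1) (n + 1) * hsign

theorem ell_succ (k n : ℕ) : ell k ((n + 1 : ℕ) : ℤ) =
    (-1) ^ (n + 1) * ∑ i ∈ range (n + 1), (n.choose i : ℝ) * taylorCoef k (i + 1 + k) := by
  rw [ell, if_pos (by omega), Int.toNat_natCast, ← Ico_add_one_right_eq_Icc,
    sum_Ico_eq_sum_range]
  refine congrArg _ (sum_congr rfl fun i _ => ?_)
  rw [taylorCoef, mul_div_assoc, add_comm 1 i, Nat.add_sub_cancel, Nat.add_sub_cancel]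

theorem norm_one_sub_lt_norm {s : ℂ} (hs : 1 / 2 < s.re) : ‖1 - s‖ < ‖s‖ := by
  rw [← sq_lt_sq₀ (norm_nonneg _) (norm_nonneg _), Complex.sq_norm, Complex.sq_norm,
    normSq_apply, normSq_apply, sub_re, sub_im, one_re, one_im]
  nlinarith

theorem hasSum_taylorCoef_tail (k : ℕ) {s : ℂ} (hs : s ≠ 1) :
    HasSum (fun j => (taylorCoef k (j + 1 + k) : ℂ) * (s - 1) ^ (j + 1))
      (riemannZeta s ^ k -
        (∑ m ∈ range (k + 1), (taylorCoef k m : ℂ) * (s - 1) ^ m) / (s - 1) ^ k) := by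
  have hs' : (s - 1) ^ k ≠ 0 := pow_ne_zero _ (sub_ne_zero.mpr hs)
  convert! ((hasSum_nat_add_iff' (k + 1)).mpr (hasSum_taylorCoef k s)).div_const ((s - 1) ^ k)
    using 1
  · funext j
    rw [eq_div_iff hs', mul_assoc, ← pow_add, add_assoc j 1 k, add_comm 1 k]
  · rw [riemannZeta_eq_inv_sub_mul hs, sub_div, mul_pow, inv_pow, ← div_eq_inv_mul]

theorem hasSum_ell {k : ℕ} (hk : 0 < k) {s : ℂ} (hs : 1 / 2 < s.re) (hs1 : s ≠ 1) :
    HasSum (fun n : ℕ => (ell k n : ℂ) * ((1 - s) / s) ^ n)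
      (riemannZeta s ^ k - polarPart k s) := by
  have hs0 : s ≠ 0 := by
    rintro rfl
    norm_num at hs
  have hs1' : s - 1 ≠ 0 := sub_ne_zero.mpr hs1
  set u : ℂ := (s - 1) / s with hu
  have hu1 : ‖u‖ < 1 := by
    rw [hu, norm_div, div_lt_one (norm_pos_iff.mpr hs0), norm_sub_rev]
    exact norm_one_sub_lt_norm hs
  have hr : 0 < ‖u‖ / (1 - ‖u‖) :=
    div_pos (norm_pos_iff.mpr (div_ne_zero hs1' hs0)) (sub_pos.mpr hu1)
  have hsum : Summable fun j =>
      ‖(taylorCoef k (j + 1 + k) : ℂ)‖ * (‖u‖ / (1 - ‖u‖)) ^ (j + 1) := by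
    refine (((summable_nat_add_iff (1 + k)).mpr (summable_abs_taylorCoef_mul_pow k hr.le)).div_const
      ((‖u‖ / (1 - ‖u‖)) ^ k)).congr fun j => ?_
    rw [norm_real, Real.norm_eq_abs, ← add_assoc, pow_add _ (j + 1), ← mul_assoc,
      mul_div_cancel_right₀ _ (pow_ne_zero _ hr.ne')]
  have heuler := hasSum_euler_transform hu1 hsum
  rw [show u / (1 - u) = s - 1 by rw [hu]; field_simp; ring,
    (hasSum_taylorCoef_tail k hs1).tsum_eq] at heuler
  refine (hasSum_nat_add_iff' 1).mp ?_
  convert! heuler using 1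
  · funext n
    rw [ell_succ, hu, show (1 - s) / s = -1 * ((s - 1) / s) by ring, mul_pow]
    have hsign : (-1 : ℂ) ^ (n + 1) * (-1) ^ (n + 1) = 1 := by rw [← mul_pow]; simp
    push_cast
    linear_combination ((∑ i ∈ range (n + 1), (n.choose i : ℂ) * taylorCoef k (i + 1 + k)) *
      ((s - 1) / s) ^ (n + 1)) * hsign
  · rw [sum_range_one, Nat.cast_zero, ell_zero hk, polarPart_eq hk hs1, sum_range_succ, add_div,
      mul_div_cancel_right₀ _ (pow_ne_zero _ hs1')]
    push_cast
    ring

/-! ### Linear growth of the coefficients and the Lindelöf Hypothesis -/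

/-- The Poisson weight `e^{-x} x^n / n!`: the probability of `n` under the Poisson law of
parameter `x`. -/
noncomputable def poissonWeight (n : ℕ) (x : ℝ) : ℝ := Real.exp (-x) * (x ^ n / n.factorial)

theorem integral_sq_poissonWeight (n : ℕ) :
    ∫ x in Set.Ioi (0 : ℝ), poissonWeight n x ^ 2 = n.centralBinom / (2 * 4 ^ n) := by
  have hgamma : ∫ x in Set.Ioi (0 : ℝ), x ^ (2 * n) * Real.exp (-(2 * x)) =
      (2 * n).factorial / (2 * 4 ^ n) := by
    have h := Real.integral_rpow_mul_exp_neg_mul_Ioi (a := (2 * n : ℕ) + 1) (r := 2)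
      (by positivity) two_pos
    simp_rw [Real.Gamma_nat_eq_factorial, add_sub_cancel_right, Real.rpow_natCast] at h
    rw [h, ← Nat.cast_add_one, Real.rpow_natCast, pow_succ, pow_mul,
      show (1 / 2 : ℝ) ^ 2 = 4⁻¹ by norm_num, inv_pow]
    ring
  have hbinom : (n.centralBinom : ℝ) * (n.factorial : ℝ) ^ 2 = (2 * n).factorial := by
    rw [← Nat.choose_mul_factorial_mul_factorial (show n ≤ 2 * n by lia),
      show 2 * n - n = n by lia, Nat.centralBinom_eq_two_mul_choose]
    push_cast
    ring
  calc ∫ x in Set.Ioi (0 : ℝ), poissonWeight n x ^ 2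
      = ∫ x in Set.Ioi (0 : ℝ), ((n.factorial : ℝ) ^ 2)⁻¹ *
          (x ^ (2 * n) * Real.exp (-(2 * x))) := by
        congr with x
        rw [poissonWeight, show -(2 * x) = -x + -x by ring, Real.exp_add]
        ring
    _ = n.centralBinom / (2 * 4 ^ n) := by
        rw [integral_const_mul, hgamma, ← hbinom]
        field_simp

theorem one_le_mul_integral_sq_poissonWeight (n : ℕ) :
    1 ≤ 4 * (n + 1) * ∫ x in Set.Ioi (0 : ℝ), poissonWeight n x ^ 2 := by
  have hbinom : (4 : ℝ) ^ n ≤ 2 * (n + 1) * n.centralBinom := by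
    rcases n.eq_zero_or_pos with rfl | hn
    · norm_num
    · have h : (4 : ℝ) ^ n ≤ 2 * n * n.centralBinom := by
        exact_mod_cast Nat.four_pow_le_two_mul_self_mul_centralBinom n hn
      refine h.trans ?_
      gcongr
      linarith
  rw [integral_sq_poissonWeight, mul_div_assoc', one_le_div (by positivity)]
  linarith

theorem integral_sq_sub_le {α : Type*} [MeasurableSpace α] {μ : Measure α} {f g : α → ℝ}
    (hf : Integrable (fun x => f x ^ 2) μ) (hg : Integrable (fun x => g x ^ 2) μ) :
    ∫ x, (f x - g x) ^ 2 ∂μ ≤ 2 * ∫ x, f x ^ 2 ∂μ + 2 * ∫ x, g x ^ 2 ∂μ := by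
  rw [← integral_const_mul, ← integral_const_mul,
    ← integral_add (hf.const_mul 2) (hg.const_mul 2)]
  refine integral_mono_of_nonneg (.of_forall fun x => sq_nonneg _)
    ((hf.const_mul 2).add (hg.const_mul 2)) (.of_forall fun x => ?_)
  linarith [sq_nonneg (f x + g x)]

theorem exists_abs_le_of_tendsto_integral_sq_sub_sum {f : ℝ → ℝ} {a : ℕ → ℝ}
    (hint : ∀ N : ℕ, IntegrableOn
      (fun x : ℝ => (f x - ∑ n ∈ range (N + 1), a n * poissonWeight n x) ^ 2) (Set.Ioi 0))
    (hlim : Tendsto (fun N : ℕ => ∫ x in Set.Ioi (0 : ℝ),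
      (f x - ∑ n ∈ range (N + 1), a n * poissonWeight n x) ^ 2) atTop (𝓝 0)) :
    ∃ C : ℝ, ∀ n : ℕ, |a n| ≤ C * (n + 1) := by
  obtain ⟨K, hK⟩ := hlim.bddAbove_range
  replace hK (N : ℕ) : ∫ x in Set.Ioi (0 : ℝ),
      (f x - ∑ n ∈ range (N + 1), a n * poissonWeight n x) ^ 2 ≤ K := hK ⟨N, rfl⟩
  have hK0 : 0 ≤ K := (integral_nonneg fun x => sq_nonneg _).trans (hK 0)
  have hterm (N : ℕ) :
      a (N + 1) ^ 2 * ∫ x in Set.Ioi (0 : ℝ), poissonWeight (N + 1) x ^ 2 ≤ 4 * K := by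
    have h := integral_sq_sub_le (hint N) (hint (N + 1))
    simp_rw [sum_range_succ _ (N + 1), sub_sub_sub_cancel_left, add_sub_cancel_left,
      mul_pow, integral_const_mul, ← sum_range_succ] at h
    linarith [hK N, hK (N + 1)]
  have hsq (n : ℕ) : a n ^ 2 ≤ (a 0 ^ 2 + 16 * K) * (n + 1) := by
    rcases n with _ | N
    · rw [Nat.cast_zero, zero_add, mul_one]
      linarith
    · have hmass := one_le_mul_integral_sq_poissonWeight (N + 1)
      set n : ℝ := ((N + 1 : ℕ) : ℝ)
      set w : ℝ := ∫ x in Set.Ioi (0 : ℝ), poissonWeight (N + 1) x ^ 2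
      have : 0 ≤ n := Nat.cast_nonneg _
      calc a (N + 1) ^ 2 ≤ a (N + 1) ^ 2 * (4 * (n + 1) * w) :=
            le_mul_of_one_le_right (sq_nonneg _) hmass
        _ = 4 * (n + 1) * (a (N + 1) ^ 2 * w) := by ring
        _ ≤ 4 * (n + 1) * (4 * K) := mul_le_mul_of_nonneg_left (hterm N) (by positivity)
        _ ≤ (a 0 ^ 2 + 16 * K) * (n + 1) := by
          linarith [mul_nonneg (sq_nonneg (a 0)) (add_nonneg this zero_le_one)]
  refine ⟨1 + (a 0 ^ 2 + 16 * K), fun n => ?_⟩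
  have : (0 : ℝ) ≤ n := n.cast_nonneg
  nlinarith [hsq n, sq_abs (a n), sq_nonneg (|a n| - 1), abs_nonneg (a n)]

theorem norm_tsum_mul_pow_le {𝕜 : Type*} [NormedField 𝕜] {a : ℕ → 𝕜} {C : ℝ}
    (ha : ∀ n : ℕ, ‖a n‖ ≤ C * (n + 1)) {w : 𝕜} (hw : ‖w‖ < 1) :
    ‖∑' n, a n * w ^ n‖ ≤ C / (1 - ‖w‖) ^ 2 := by
  have h := (hasSum_choose_mul_geometric_of_norm_lt_one 1 (r := ‖w‖) (by simpa using hw)).mul_left C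
  rw [mul_one_div] at h
  refine tsum_of_norm_bounded h fun n => ?_
  rw [norm_mul, norm_pow, ← mul_assoc]
  gcongr
  simpa using ha n

theorem div_le_one_sub_norm_one_sub_div {s : ℂ} (hs : s ≠ 0) :
    (2 * s.re - 1) / (2 * ‖s‖ ^ 2) ≤ 1 - ‖(1 - s) / s‖ := by
  have hne : ‖s‖ ≠ 0 := norm_ne_zero_iff.mpr hs
  have hsub : ‖1 - s‖ ^ 2 = ‖s‖ ^ 2 - (2 * s.re - 1) := by
    rw [Complex.sq_norm, Complex.sq_norm, normSq_apply, normSq_apply, sub_re, sub_im, one_re,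
      one_im]
    ring
  have hquot : (2 * s.re - 1) / (2 * ‖s‖ ^ 2) = (1 - (‖1 - s‖ / ‖s‖) ^ 2) / 2 := by
    rw [div_pow, hsub]
    field_simp
    ring
  rw [norm_div, hquot]
  linarith [sq_nonneg (1 - ‖1 - s‖ / ‖s‖)]

theorem norm_riemannZeta_pow_le {k : ℕ} (hk : 0 < k) {C : ℝ}
    (hell : ∀ n : ℕ, |ell k n| ≤ C * (n + 1)) {s : ℂ} (hs : 1 / 2 < s.re) (hs1 : 1 ≤ ‖s - 1‖) :
    ‖riemannZeta s‖ ^ k ≤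
      4 * C * ‖s‖ ^ 4 / (2 * s.re - 1) ^ 2 + ‖s‖ * ∑ j ∈ range k, |aCoef k j| := by
  have hC : 0 ≤ C := by simpa using (abs_nonneg _).trans (hell 0)
  have hre : 0 < 2 * s.re - 1 := by linarith
  have hpos : 0 < ‖s‖ := by linarith [re_le_norm s]
  have hgap := div_le_one_sub_norm_one_sub_div (norm_pos_iff.mp hpos)
  have hgap_pos : 0 < (2 * s.re - 1) / (2 * ‖s‖ ^ 2) := by positivity
  have hne : s ≠ 1 := fun h => by norm_num [h] at hs1
  have hreg : ‖riemannZeta s ^ k - polarPart k s‖ ≤ 4 * C * ‖s‖ ^ 4 / (2 * s.re - 1) ^ 2 := by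
    rw [← (hasSum_ell hk hs hne).tsum_eq]
    calc _ ≤ C / (1 - ‖(1 - s) / s‖) ^ 2 :=
          norm_tsum_mul_pow_le (fun n => by simpa using hell n) (by linarith)
      _ ≤ C / ((2 * s.re - 1) / (2 * ‖s‖ ^ 2)) ^ 2 := by gcongr
      _ = 4 * C * ‖s‖ ^ 4 / (2 * s.re - 1) ^ 2 := by
          field_simp
          norm_num
  have hpolar : ‖polarPart k s‖ ≤ ‖s‖ * ∑ j ∈ range k, |aCoef k j| := by
    refine (norm_polarPart_le k one_pos hs1).trans ?_
    simp_rw [one_pow, div_one]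
    gcongr
    exact div_le_self hpos.le hs1
  rw [← norm_pow, ← sub_add_cancel (riemannZeta s ^ k) (polarPart k s)]
  exact (norm_add_le _ _).trans (add_le_add hreg hpolar)

/-- The point of ordinate `t` at distance `1 / (2|t|)` to the right of the critical line. It is
close enough to `1/2 + it` for `ζ` to change only by `O(1)`, and far enough from the critical line
for the expansion in powers of `(1 - s) / s` to be polynomially bounded. -/
noncomputable def nearCritical (t : ℝ) : ℂ := ((1 / 2 + |t|⁻¹ / 2 : ℝ) : ℂ) + t * I

@[simp]
theorem nearCritical_re (t : ℝ) : (nearCritical t).re = 1 / 2 + |t|⁻¹ / 2 := by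
  rw [nearCritical, add_re, ofReal_re, re_ofReal_mul, I_re, mul_zero, add_zero]

@[simp]
theorem nearCritical_im (t : ℝ) : (nearCritical t).im = t := by simp [nearCritical]

theorem norm_nearCritical_le {t : ℝ} (ht : 1 ≤ |t|) : ‖nearCritical t‖ ≤ 2 * |t| := by
  have hinv : |t|⁻¹ ≤ 1 := inv_le_one_of_one_le₀ ht
  have h := norm_le_abs_re_add_abs_im (nearCritical t)
  rw [nearCritical_re, nearCritical_im, abs_of_nonneg (by positivity)] at h
  linarith

theorem exists_norm_riemannZeta_nearCritical_pow_le {k : ℕ} (hk : 0 < k) {C : ℝ}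
    (hell : ∀ n : ℕ, |ell k n| ≤ C * (n + 1)) :
    ∃ B : ℝ, 0 ≤ B ∧ ∀ t : ℝ, 1 ≤ |t| → ‖riemannZeta (nearCritical t)‖ ^ k ≤ B * |t| ^ 6 := by
  have hC : 0 ≤ C := by simpa using (abs_nonneg _).trans (hell 0)
  refine ⟨64 * C + 2 * ∑ j ∈ range k, |aCoef k j|, by positivity, fun t ht => ?_⟩
  have htp : 0 < |t| := by linarith
  have hsub : 1 ≤ ‖nearCritical t - 1‖ := by
    refine ht.trans ?_
    simpa using abs_im_le_norm (nearCritical t - 1)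
  have hre : 2 * (nearCritical t).re - 1 = |t|⁻¹ := by
    rw [nearCritical_re]
    ring
  calc ‖riemannZeta (nearCritical t)‖ ^ k
      ≤ 4 * C * ‖nearCritical t‖ ^ 4 / (|t|⁻¹) ^ 2 +
          ‖nearCritical t‖ * ∑ j ∈ range k, |aCoef k j| := by
        rw [← hre]
        exact norm_riemannZeta_pow_le hk hell (by rw [nearCritical_re]; simpa using htp) hsub
    _ ≤ 4 * C * (2 * |t|) ^ 4 / (|t|⁻¹) ^ 2 + 2 * |t| * ∑ j ∈ range k, |aCoef k j| := by
        gcongr <;> exact norm_nearCritical_le ht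
    _ = 64 * C * |t| ^ 6 + 2 * (∑ j ∈ range k, |aCoef k j|) * |t| := by
        field_simp
        ring
    _ ≤ (64 * C + 2 * ∑ j ∈ range k, |aCoef k j|) * |t| ^ 6 := by
        rw [add_mul]
        gcongr
        exact le_self_pow₀ ht (by norm_num)

theorem norm_riemannZeta_le {s : ℂ} (hs : 1 / 4 ≤ s.re) (him : 3 / 4 ≤ |s.im|) :
    ‖riemannZeta s‖ ≤ 6 * ‖s‖ := by
  have hs1 : s ≠ 1 := fun h => by norm_num [h] at him
  have hsub : 3 / 4 ≤ ‖s - 1‖ := him.trans (by simpa using abs_im_le_norm (s - 1))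
  have hre : 0 < s.re := by linarith
  rw [riemannZeta_eq_inv_sub_mul hs1, norm_mul, norm_inv]
  calc ‖s - 1‖⁻¹ * ‖riemannZeta₁ s‖ ≤ ‖s - 1‖⁻¹ * (‖s‖ * (1 + ‖s - 1‖ / s.re)) := by
        gcongr
        exact norm_riemannZeta₁_le hre
    _ = (‖s - 1‖⁻¹ + s.re⁻¹) * ‖s‖ := by
        have : ‖s - 1‖ ≠ 0 := by linarith
        field_simp
    _ ≤ ((3 / 4)⁻¹ + (1 / 4)⁻¹) * ‖s‖ := by gcongr
    _ ≤ 6 * ‖s‖ := by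
        gcongr
        norm_num

theorem norm_deriv_riemannZeta_le {z : ℂ} (h₀ : 1 / 2 ≤ z.re) (h₁ : z.re ≤ 1)
    (him : 1 ≤ |z.im|) : ‖deriv riemannZeta z‖ ≤ 72 * |z.im| := by
  have hball (y : ℂ) (hy : y ∈ Metric.closedBall z (1 / 4)) :
      1 / 4 ≤ y.re ∧ 3 / 4 ≤ |y.im| ∧ ‖y‖ ≤ 3 * |z.im| := by
    rw [mem_closedBall_iff_norm] at hy
    have hre := (abs_re_le_norm (y - z)).trans hy
    have hyim := (abs_im_le_norm (y - z)).trans hy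
    rw [sub_re, abs_le] at hre
    rw [sub_im, abs_sub_comm] at hyim
    have hz : ‖z‖ ≤ z.re + |z.im| := by
      simpa [abs_of_nonneg (by linarith : 0 ≤ z.re)] using norm_le_abs_re_add_abs_im z
    exact ⟨by linarith [hre.1], by linarith [abs_sub_abs_le_abs_sub z.im y.im],
      by linarith [norm_le_norm_add_norm_sub' y z]⟩
  have hdiff : DiffContOnCl ℂ riemannZeta (Metric.ball z (1 / 4)) := by
    refine DifferentiableOn.diffContOnCl fun y hy => ?_
    rw [closure_ball _ (by norm_num)] at hy
    have hy1 : y ≠ 1 := fun h => by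
      have := (hball y hy).2.1
      norm_num [h] at this
    exact (differentiableAt_riemannZeta hy1).differentiableWithinAt
  refine (norm_deriv_le_of_forall_mem_sphere_norm_le (C := 18 * |z.im|) (by norm_num) hdiff
    fun y hy => ?_).trans_eq (by ring)
  obtain ⟨hre, hyim, hy⟩ := hball y (Metric.sphere_subset_closedBall hy)
  linarith [norm_riemannZeta_le hre hyim]

theorem norm_riemannZeta_sub_nearCritical_le {t : ℝ} (ht : 1 ≤ |t|) :
    ‖riemannZeta (1 / 2 + t * I) - riemannZeta (nearCritical t)‖ ≤ 36 := by
  have hinv : |t|⁻¹ ≤ 1 := inv_le_one_of_one_le₀ ht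
  have hinv0 : 0 < |t|⁻¹ := by positivity
  set S : Set ℂ := Set.Icc (1 / 2) 1 ×ℂ {t}
  have hconv : Convex ℝ S :=
    ((convex_Icc _ _).linear_preimage reLm).inter ((convex_singleton t).linear_preimage imLm)
  have hne (z : ℂ) (hz : z ∈ S) : z ≠ 1 := by
    rintro rfl
    have : t = 0 := by simpa using hz.2.symm
    norm_num [this] at ht
  have hderiv (z : ℂ) (hz : z ∈ S) : ‖deriv riemannZeta z‖ ≤ 72 * |t| := by
    obtain ⟨⟨h₀, h₁⟩, him : z.im = t⟩ := hz
    simpa only [him] using norm_deriv_riemannZeta_le h₀ h₁ (him ▸ ht)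
  have hnear : nearCritical t ∈ S :=
    ⟨by rw [Set.mem_preimage, nearCritical_re]; constructor <;> linarith, by simp⟩
  have hline : (1 / 2 + t * I : ℂ) ∈ S := ⟨⟨by simp, by norm_num⟩, by simp⟩
  have hdist : (1 / 2 + t * I : ℂ) - nearCritical t = ((-(|t|⁻¹ / 2) : ℝ) : ℂ) := by
    rw [nearCritical]
    push_cast
    ring
  calc ‖riemannZeta (1 / 2 + t * I) - riemannZeta (nearCritical t)‖
      ≤ 72 * |t| * ‖(1 / 2 + t * I : ℂ) - nearCritical t‖ :=
        hconv.norm_image_sub_le_of_norm_deriv_le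
          (fun z hz => differentiableAt_riemannZeta (hne z hz)) hderiv hnear hline
    _ = 36 := by
        rw [hdist, norm_real, norm_neg, Real.norm_of_nonneg (by positivity)]
        field_simp
        norm_num

theorem lindelofHypothesis_of_abs_ell_le
    (h : ∀ k : ℕ, 0 < k → ∃ C : ℝ, ∀ n : ℕ, |ell k n| ≤ C * (n + 1)) : LindelofHypothesis := by
  intro ε hε
  obtain ⟨k, hk⟩ := exists_nat_gt (6 / ε)
  have hkpos : (0 : ℝ) < k := lt_trans (by positivity) hk
  have hk0 : 0 < k := Nat.cast_pos.mp hkpos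
  obtain ⟨C, hC⟩ := h k hk0
  obtain ⟨B, hB, hBbound⟩ := exists_norm_riemannZeta_nearCritical_pow_le hk0 hC
  refine ⟨36 + B ^ (k : ℝ)⁻¹, fun t ht => ?_⟩
  have hnear : ‖riemannZeta (nearCritical t)‖ ≤ B ^ (k : ℝ)⁻¹ * |t| ^ ε := by
    calc ‖riemannZeta (nearCritical t)‖ ≤ (B * |t| ^ 6) ^ (k : ℝ)⁻¹ := by
          rw [← Real.pow_rpow_inv_natCast (norm_nonneg (riemannZeta (nearCritical t))) hk0.ne']
          gcongr
          exact hBbound t ht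
      _ = B ^ (k : ℝ)⁻¹ * |t| ^ (6 * (k : ℝ)⁻¹) := by
          rw [Real.mul_rpow hB (by positivity), ← Real.rpow_natCast, ← Real.rpow_mul (abs_nonneg t)]
          norm_num
      _ ≤ B ^ (k : ℝ)⁻¹ * |t| ^ ε := by
          gcongr
          rw [← div_eq_mul_inv, div_le_iff₀ hkpos, mul_comm, ← div_le_iff₀ hε]
          exact hk.le
  calc ‖riemannZeta (1 / 2 + t * I)‖
      ≤ ‖riemannZeta (1 / 2 + t * I) - riemannZeta (nearCritical t)‖ +
          ‖riemannZeta (nearCritical t)‖ := norm_le_norm_sub_add _ _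
    _ ≤ 36 * |t| ^ ε + B ^ (k : ℝ)⁻¹ * |t| ^ ε := by
        refine add_le_add ((norm_riemannZeta_sub_nearCritical_le ht).trans ?_) hnear
        linarith [Real.one_le_rpow ht hε.le]
    _ = (36 + B ^ (k : ℝ)⁻¹) * |t| ^ ε := by ring

/-! ### Parseval in the unit disc -/

theorem hasSum_norm_sq_of_orthonormal {𝕜 E ι : Type*} [RCLike 𝕜] [NormedAddCommGroup E]
    [InnerProductSpace 𝕜 E] {v : ι → E} (hv : Orthonormal 𝕜 v) {c : ι → 𝕜} {x : E}
    (hx : HasSum (fun i => c i • v i) x) : HasSum (fun i => ‖c i‖ ^ 2) (‖x‖ ^ 2) := by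
  refine (hx.norm.pow 2).congr fun s => ?_
  have h : ((‖∑ i ∈ s, c i • v i‖ ^ 2 : ℝ) : 𝕜) = ((∑ i ∈ s, ‖c i‖ ^ 2 : ℝ) : 𝕜) := by
    push_cast
    rw [← inner_self_eq_norm_sq_to_K, hv.inner_sum]
    exact sum_congr rfl fun i _ => RCLike.conj_mul (c i)
  exact RCLike.ofReal_injective h

theorem norm_sq_toLp_eq_integral {α : Type*} [TopologicalSpace α] [CompactSpace α]
    [MeasurableSpace α] [BorelSpace α] (μ : Measure α) [IsFiniteMeasure μ] (f : C(α, ℂ)) :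
    ‖ContinuousMap.toLp (E := ℂ) 2 μ ℂ f‖ ^ 2 = ∫ x, ‖f x‖ ^ 2 ∂μ := by
  have h := ContinuousMap.inner_toLp (𝕜 := ℂ) μ f f
  simp_rw [inner_self_eq_norm_sq_to_K, RCLike.mul_conj] at h
  rw [← ofReal_inj, ← integral_complex_ofReal]
  simpa using h

theorem hasSum_norm_sq_integral {c : ℕ → ℂ} (hc : Summable fun n => ‖c n‖) :
    HasSum (fun n => ‖c n‖ ^ 2)
      (∫ x in (0 : ℝ)..1, ‖∑' n : ℕ, c n * Complex.exp (2 * π * I * x) ^ n‖ ^ 2) := by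
  have hs : Summable fun n : ℕ => c n • (fourier (n : ℤ) : C(AddCircle (1 : ℝ), ℂ)) :=
    .of_norm (by simpa [norm_smul, fourier_norm] using hc)
  set F : C(AddCircle (1 : ℝ), ℂ) := ∑' n : ℕ, c n • fourier (n : ℤ)
  have hL2 : HasSum (fun n : ℕ => c n • (fourierLp (T := 1) 2 (n : ℤ)))
      (ContinuousMap.toLp 2 (@AddCircle.haarAddCircle 1 _) ℂ F) := by
    simpa using hs.hasSum.mapL (ContinuousMap.toLp (E := ℂ) 2 (@AddCircle.haarAddCircle 1 _) ℂ)
  have hF (x : ℝ) : F x = ∑' n : ℕ, c n * Complex.exp (2 * π * I * x) ^ n := by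
    have hx := hs.hasSum.mapL (ContinuousMap.evalCLM ℂ (x : AddCircle (1 : ℝ)))
    refine hx.tsum_eq.symm.trans (tsum_congr fun n => ?_)
    rw [ContinuousMap.evalCLM_apply, ContinuousMap.smul_apply, smul_eq_mul, fourier_coe_apply,
      ← Complex.exp_nat_mul, ofReal_one, div_one, Int.cast_natCast]
    ring_nf
  convert! hasSum_norm_sq_of_orthonormal
    ((orthonormal_fourier (T := 1)).comp (fun n : ℕ => (n : ℤ)) Nat.cast_injective) hL2
  rw [norm_sq_toLp_eq_integral, AddCircle.integral_haarAddCircle, inv_one, one_smul,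
    ← AddCircle.intervalIntegral_preimage 1 0, zero_add]
  simp_rw [hF]

-- Parseval on the circles `|w| = ρ`, then `ρ → 1`.
theorem summable_norm_sq_of_norm_tsum_sq_le {c : ℕ → ℂ} {G : ℝ → ℝ} {ρ₀ : ℝ}
    (hρ₀ : ρ₀ < 1) (hG : IntegrableOn G (Set.Ioo 0 1))
    (hsum : ∀ ρ ∈ Set.Ioo ρ₀ 1, Summable fun n => ‖c n * ρ ^ n‖)
    (hle : ∀ ρ ∈ Set.Ioo ρ₀ 1, ∀ x ∈ Set.Ioo (0 : ℝ) 1,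
      ‖∑' n, c n * (ρ * Complex.exp (2 * π * I * x)) ^ n‖ ^ 2 ≤ G x) :
    Summable fun n => ‖c n‖ ^ 2 := by
  have hpartial (N : ℕ) (ρ : ℝ) (hρ : ρ ∈ Set.Ioo ρ₀ 1) :
      ∑ n ∈ range N, ‖c n * ρ ^ n‖ ^ 2 ≤ ∫ x in Set.Ioo 0 1, G x := by
    refine (sum_le_hasSum _ (fun n _ => sq_nonneg _)
      (hasSum_norm_sq_integral (hsum ρ hρ))).trans ?_
    simp_rw [mul_assoc, ← mul_pow]
    rw [intervalIntegral.integral_of_le zero_le_one, integral_Ioc_eq_integral_Ioo]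
    refine integral_mono_of_nonneg (.of_forall fun x => sq_nonneg _) hG ?_
    exact (ae_restrict_iff' measurableSet_Ioo).mpr
      (.of_forall (by simpa only [mul_assoc] using hle ρ hρ))
  refine summable_of_sum_range_le (c := ∫ x in Set.Ioo 0 1, G x) (fun n => sq_nonneg _) fun N => ?_
  have hlim : Tendsto (fun ρ : ℝ => ∑ n ∈ range N, ‖c n * ρ ^ n‖ ^ 2) (𝓝[<] 1)
      (𝓝 (∑ n ∈ range N, ‖c n * (1 : ℝ) ^ n‖ ^ 2)) :=
    (Continuous.tendsto (by fun_prop) 1).mono_left nhdsWithin_le_nhds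
  simp only [ofReal_one, one_pow, mul_one] at hlim
  exact le_of_tendsto hlim (by filter_upwards [Ioo_mem_nhdsLT hρ₀] using hpartial N)

theorem norm_one_sub_le_two_mul {ρ : ℝ} (hρ : ρ ∈ Set.Icc (0 : ℝ) 1) {e : ℂ} (he : ‖e‖ = 1) :
    ‖1 - e‖ ≤ 2 * ‖1 - ρ * e‖ := by
  obtain ⟨hρ₀, hρ₁⟩ := hρ
  have hsub : 1 - ρ ≤ ‖1 - ρ * e‖ := by
    simpa [he, abs_of_nonneg hρ₀] using norm_sub_norm_le (1 : ℂ) (ρ * e)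
  calc ‖1 - e‖ = ‖(1 - ρ * e) - ((1 - ρ : ℝ) : ℂ) * e‖ := by
        push_cast
        ring_nf
    _ ≤ ‖1 - ρ * e‖ + (1 - ρ) := by
        refine (norm_sub_le _ _).trans_eq ?_
        rw [norm_mul, he, mul_one, norm_real, Real.norm_of_nonneg (by linarith)]
    _ ≤ 2 * ‖1 - ρ * e‖ := by linarith

theorem four_mul_min_le_norm_one_sub_exp {x : ℝ} (hx : x ∈ Set.Icc (0 : ℝ) 1) :
    4 * min x (1 - x) ≤ ‖1 - Complex.exp (2 * π * I * x)‖ := by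
  have hsin {y : ℝ} (h₀ : 0 ≤ y) (h₁ : y ≤ 1 / 2) : 2 * y ≤ Real.sin (π * y) := by
    have h := Real.mul_le_sin (x := π * y) (by positivity) (by nlinarith [Real.pi_pos])
    rwa [← mul_assoc, div_mul_cancel₀ _ Real.pi_ne_zero] at h
  have hnorm : ‖1 - Complex.exp (2 * π * I * x)‖ = 2 * |Real.sin (π * x)| := by
    rw [norm_sub_rev, show (2 * π * I * x : ℂ) = I * ((2 * π * x : ℝ) : ℂ) by push_cast; ring,
      norm_exp_I_mul_ofReal_sub_one, mul_div_right_comm, mul_div_cancel_left₀ _ two_ne_zero,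
      norm_mul, Real.norm_two, Real.norm_eq_abs]
  rw [hnorm]
  rcases le_total x (1 / 2) with h | h
  · rw [min_eq_left (by linarith)]
    linarith [hsin hx.1 h, le_abs_self (Real.sin (π * x))]
  · have := hsin (y := 1 - x) (by linarith [hx.2]) (by linarith)
    rw [show π * (1 - x) = π - π * x by ring, Real.sin_pi_sub] at this
    rw [min_eq_right (by linarith)]
    linarith [le_abs_self (Real.sin (π * x))]

theorem norm_inv_one_sub_rpow_le {ρ x p : ℝ} (hρ : ρ ∈ Set.Icc (0 : ℝ) 1)
    (hx : x ∈ Set.Ioo (0 : ℝ) 1) (hp : 0 ≤ p) :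
    ‖(1 - ρ * Complex.exp (2 * π * I * x))⁻¹‖ ^ p ≤ x ^ (-p) + (1 - x) ^ (-p) := by
  obtain ⟨hx₀, hx₁⟩ := hx
  have he : ‖Complex.exp (2 * π * I * x)‖ = 1 := by
    rw [show (2 * π * I * x : ℂ) = ((2 * π * x : ℝ) : ℂ) * I by push_cast; ring,
      norm_exp_ofReal_mul_I]
  have hmin : 0 < min x (1 - x) := lt_min hx₀ (by linarith)
  have hdist : min x (1 - x) ≤ ‖1 - ρ * Complex.exp (2 * π * I * x)‖ := by
    linarith [norm_one_sub_le_two_mul hρ he, four_mul_min_le_norm_one_sub_exp ⟨hx₀.le, hx₁.le⟩]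
  have hx₀p : 0 ≤ x ^ (-p) := Real.rpow_nonneg hx₀.le _
  have hx₁p : 0 ≤ (1 - x) ^ (-p) := Real.rpow_nonneg (by linarith) _
  calc ‖(1 - ρ * Complex.exp (2 * π * I * x))⁻¹‖ ^ p ≤ (min x (1 - x))⁻¹ ^ p := by
        rw [norm_inv]
        gcongr
    _ = min x (1 - x) ^ (-p) := by rw [Real.rpow_neg hmin.le, Real.inv_rpow hmin.le]
    _ ≤ x ^ (-p) + (1 - x) ^ (-p) := by
        rcases min_choice x (1 - x) with h | h <;> rw [h] <;> linarith

theorem integrableOn_rpow_neg_add_rpow_neg {p : ℝ} (hp : p < 1) :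
    IntegrableOn (fun x : ℝ => x ^ (-p) + (1 - x) ^ (-p)) (Set.Ioo 0 1) := by
  have h₀ : IntervalIntegrable (fun x : ℝ => x ^ (-p)) volume 0 1 :=
    intervalIntegral.intervalIntegrable_rpow' (by linarith)
  have h₁ : IntervalIntegrable (fun x : ℝ => (1 - x) ^ (-p)) volume 0 1 := by
    simpa using (h₀.comp_sub_left 1).symm
  exact (h₀.add h₁).1.mono_set Set.Ioo_subset_Ioc_self

theorem half_lt_re_inv_one_sub {w : ℂ} (hw : ‖w‖ < 1) : 1 / 2 < ((1 - w)⁻¹).re := by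
  have hne : 1 - w ≠ 0 := fun h => by simp [← sub_eq_zero.mp h] at hw
  have hsq : normSq w < 1 := by
    rw [normSq_eq_norm_sq]
    exact pow_lt_one₀ (norm_nonneg w) hw two_ne_zero
  rw [inv_re, lt_div_iff₀ (normSq_pos.mpr hne)]
  rw [normSq_apply] at hsq ⊢
  rw [sub_re, one_re, sub_im, one_im]
  nlinarith

theorem LindelofHypothesis.exists_norm_pow_sub_polarPart_le (h : LindelofHypothesis) {k : ℕ}
    (hk : 0 < k) {δ d : ℝ} (hδ : 0 < δ) (hd : 0 < d) :
    ∃ B : ℝ, ∀ s : ℂ, 1 / 2 < s.re → d ≤ ‖s - 1‖ →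
      ‖riemannZeta s ^ k - polarPart k s‖ ≤ B * ‖s‖ ^ δ := by
  obtain ⟨C, hC⟩ := h.exists_norm_riemannZeta₁_le (ε := δ / k) (by positivity)
  set A := 1 + 1 / d
  set S := ∑ j ∈ range k, |aCoef k j| / d ^ j
  refine ⟨(A * C) ^ k + 2 ^ δ * A * S, fun s hs hds => ?_⟩
  have hn : 1 / 2 < ‖s‖ := hs.trans_le (re_le_norm s)
  have hn0 : 0 < ‖s‖ := by linarith
  have hsub : 0 < ‖s - 1‖ := hd.trans_le hds
  have hs1 : s ≠ 1 := fun h => by simp [h] at hsub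
  have hC0 : 0 ≤ C := nonneg_of_mul_nonneg_left ((norm_nonneg _).trans (hC s hs.le)) (by positivity)
  have hquot : ‖s‖ / ‖s - 1‖ ≤ A := by
    calc ‖s‖ / ‖s - 1‖ ≤ (‖s - 1‖ + 1) / ‖s - 1‖ := by
          gcongr
          simpa using norm_add_le (s - 1) 1
      _ = 1 + 1 / ‖s - 1‖ := by rw [add_div, div_self hsub.ne']
      _ ≤ 1 + 1 / d := by gcongr
  have hzeta : ‖riemannZeta s ^ k‖ ≤ (A * C) ^ k * ‖s‖ ^ δ := by
    have hpow : (‖s‖ ^ (δ / k)) ^ k = ‖s‖ ^ δ := by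
      rw [← Real.rpow_mul_natCast hn0.le, div_mul_cancel₀ _ (by positivity)]
    rw [norm_pow, ← hpow, ← mul_pow]
    gcongr
    calc ‖riemannZeta s‖ ≤ ‖s - 1‖⁻¹ * (C * ‖s‖ ^ (1 + δ / k)) := by
          rw [riemannZeta_eq_inv_sub_mul hs1, norm_mul, norm_inv]
          gcongr
          exact hC s hs.le
      _ = ‖s‖ / ‖s - 1‖ * C * ‖s‖ ^ (δ / k) := by
          rw [Real.rpow_add hn0, Real.rpow_one]
          ring
      _ ≤ A * C * ‖s‖ ^ (δ / k) := by gcongr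
  have hpolar : ‖polarPart k s‖ ≤ 2 ^ δ * A * S * ‖s‖ ^ δ := by
    have hone : 1 ≤ 2 ^ δ * ‖s‖ ^ δ := by
      rw [← Real.mul_rpow zero_le_two hn0.le]
      exact Real.one_le_rpow (by linarith) hδ.le
    calc ‖polarPart k s‖ ≤ A * S := (norm_polarPart_le k hd hds).trans (by gcongr)
      _ ≤ A * S * (2 ^ δ * ‖s‖ ^ δ) := le_mul_of_one_le_right (by positivity) hone
      _ = 2 ^ δ * A * S * ‖s‖ ^ δ := by ring
  rw [add_mul]
  exact (norm_sub_le _ _).trans (add_le_add hzeta hpolar)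

theorem hasSum_ell_mul_pow {k : ℕ} (hk : 0 < k) {w : ℂ} (hw : ‖w‖ < 1) (hw0 : w ≠ 0) :
    HasSum (fun n : ℕ => (-1) ^ n * (ell k n : ℂ) * w ^ n)
      (riemannZeta (1 - w)⁻¹ ^ k - polarPart k (1 - w)⁻¹) := by
  have hne : 1 - w ≠ 0 := fun h => by simp [← sub_eq_zero.mp h] at hw
  have hs1 : (1 - w)⁻¹ ≠ 1 := by simpa [inv_eq_one] using hw0
  convert hasSum_ell hk (half_lt_re_inv_one_sub hw) hs1 using 2 with n
  rw [show (1 - (1 - w)⁻¹) / (1 - w)⁻¹ = -1 * w by field_simp; ring, mul_pow]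
  ring

theorem LindelofHypothesis.summable_ell_sq (h : LindelofHypothesis) {k : ℕ} (hk : 0 < k) :
    Summable fun n : ℕ => ell k n ^ 2 := by
  obtain ⟨B, hB⟩ := h.exists_norm_pow_sub_polarPart_le hk (δ := 1 / 4) (d := 1 / 4)
    (by norm_num) (by norm_num)
  have hG := (integrableOn_rpow_neg_add_rpow_neg (p := 1 / 2) (by norm_num)).const_mul (B ^ 2)
  have hnorm {ρ : ℝ} (hρ : 1 / 2 < ρ) (x : ℝ) : ‖(ρ : ℂ) * Complex.exp (2 * π * I * x)‖ = ρ := by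
    rw [show (2 * π * I * x : ℂ) = ((2 * π * x : ℝ) : ℂ) * I by push_cast; ring, norm_mul,
      norm_exp_ofReal_mul_I, mul_one, norm_real, Real.norm_of_nonneg (by linarith)]
  suffices Summable fun n : ℕ => ‖(-1) ^ n * (ell k n : ℂ)‖ ^ 2 by simpa using this
  refine summable_norm_sq_of_norm_tsum_sq_le (ρ₀ := 1 / 2) (by norm_num) hG ?_ ?_
  · rintro ρ ⟨hρ, hρ1⟩
    have hρn : ‖(ρ : ℂ)‖ = ρ := by rw [norm_real, Real.norm_of_nonneg (by linarith)]
    exact (hasSum_ell_mul_pow hk (by rwa [hρn])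
      (norm_pos_iff.mp (by rw [hρn]; linarith))).summable.norm
  · rintro ρ ⟨hρ, hρ1⟩ x hx
    set w : ℂ := ρ * Complex.exp (2 * π * I * x)
    have hw : ‖w‖ = ρ := hnorm hρ x
    have hw0 : w ≠ 0 := norm_pos_iff.mp (by rw [hw]; linarith)
    have hs := half_lt_re_inv_one_sub (w := w) (by rwa [hw])
    have hne : 1 - w ≠ 0 := fun h => by norm_num [h] at hs
    have hdist : 1 / 4 ≤ ‖(1 - w)⁻¹ - 1‖ := by
      rw [show (1 - w)⁻¹ - 1 = w * (1 - w)⁻¹ by field_simp; ring, norm_mul, hw]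
      nlinarith [re_le_norm (1 - w)⁻¹]
    rw [(hasSum_ell_mul_pow hk (by rwa [hw]) hw0).tsum_eq]
    calc _ ≤ (B * ‖(1 - w)⁻¹‖ ^ (1 / 4 : ℝ)) ^ 2 := by
          gcongr
          exact hB _ hs hdist
      _ = B ^ 2 * ‖(1 - w)⁻¹‖ ^ (1 / 2 : ℝ) := by
          rw [mul_pow, ← Real.rpow_mul_natCast (norm_nonneg _)]
          norm_num
      _ ≤ B ^ 2 * (x ^ (-(1 / 2 : ℝ)) + (1 - x) ^ (-(1 / 2 : ℝ))) := by
          gcongr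
          exact norm_inv_one_sub_rpow_le ⟨by linarith, hρ1.le⟩ hx (by norm_num)

/-! ### Laguerre functions -/

theorem integral_Ioi_one_eq_integral_exp_smul {E : Type*} [NormedAddCommGroup E] [NormedSpace ℝ E]
    (f : ℝ → E) :
    ∫ r in Set.Ioi 1, f r = ∫ x in Set.Ioi 0, Real.exp x • f (Real.exp x) := by
  have himage : Real.exp '' Set.Ioi 0 = Set.Ioi 1 := by
    ext y
    constructor
    · rintro ⟨x, hx, rfl⟩
      exact Real.one_lt_exp_iff.mpr hx
    · intro hy
      exact ⟨Real.log y, Real.log_pos hy, Real.exp_log (one_pos.trans hy)⟩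
  rw [← himage, integral_image_eq_integral_abs_deriv_smul measurableSet_Ioi
    (fun x _ => (Real.hasDerivAt_exp x).hasDerivWithinAt) Real.exp_injective.injOn]
  simp_rw [abs_of_pos (Real.exp_pos _)]

theorem integral_log_pow_mul_inv_pow (j m : ℕ) :
    ∫ r in Set.Ioi (1 : ℝ), Real.log r ^ j * r⁻¹ ^ (m + 2) =
      j.factorial / ((m : ℝ) + 1) ^ (j + 1) := by
  have hgamma := Real.integral_rpow_mul_exp_neg_mul_Ioi (a := ((j + 1 : ℕ) : ℝ))
    (r := ((m + 1 : ℕ) : ℝ)) (by positivity) (by positivity)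
  rw [Real.rpow_natCast, Nat.cast_succ j, Real.Gamma_nat_eq_factorial, add_sub_cancel_right]
    at hgamma
  calc ∫ r in Set.Ioi (1 : ℝ), Real.log r ^ j * r⁻¹ ^ (m + 2)
      = ∫ x in Set.Ioi 0, x ^ (j : ℝ) * Real.exp (-(((m + 1 : ℕ) : ℝ) * x)) := by
        rw [integral_Ioi_one_eq_integral_exp_smul]
        congr with x
        rw [smul_eq_mul, Real.log_exp, Real.rpow_natCast, ← mul_neg, Real.exp_nat_mul,
          Real.exp_neg, pow_succ _ (m + 1)]
        field_simp
    _ = j.factorial / ((m : ℝ) + 1) ^ (j + 1) := by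
        rw [hgamma, Nat.cast_succ, one_div_pow, one_div_mul_eq_div]

theorem integrableOn_log_pow_mul_inv_pow (j m : ℕ) :
    IntegrableOn (fun r : ℝ => Real.log r ^ j * r⁻¹ ^ (m + 2)) (Set.Ioi 1) := by
  refine not_imp_comm.mp integral_undef ?_
  rw [integral_log_pow_mul_inv_pow]
  positivity

theorem fwdDiff_iter_choose_of_le {i n : ℕ} (h : i ≤ n) (y : ℕ) :
    (fwdDiff 1)^[n] (fun x ↦ x.choose i : ℕ → ℤ) y = if i = n then 1 else 0 := by
  obtain ⟨d, rfl⟩ := Nat.exists_eq_add_of_le' h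
  have hone : (fwdDiff 1)^[i] (fun x ↦ x.choose i : ℕ → ℤ) = fun _ => 1 := by
    simpa using fwdDiff_iter_choose 0 i
  rw [Function.iterate_add_apply, hone]
  cases d with
  | zero => simp
  | succ d =>
    rw [Function.iterate_succ_apply, fwdDiff_const, fwdDiff_iter_eq_sum_shift]
    simp

theorem sum_alternating_choose_mul_choose {i n : ℕ} (h : i ≤ n) :
    ∑ j ∈ range (n + 1), (-1 : ℤ) ^ j * n.choose j * (i + j).choose i =
      if i = n then (-1) ^ n else 0 := by
  have hdiff := congrArg ((-1 : ℤ) ^ n * ·) (fwdDiff_iter_choose_of_le h i)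
  simp only [fwdDiff_iter_eq_sum_shift, mul_sum, mul_ite, mul_one, mul_zero] at hdiff
  rw [← hdiff]
  refine sum_congr rfl fun j hj => ?_
  obtain ⟨d, rfl⟩ := Nat.exists_eq_add_of_le (mem_range_succ_iff.mp hj)
  rw [Nat.add_sub_cancel_left, pow_add, smul_eq_mul, smul_eq_mul, mul_one]
  linear_combination (-(-1 : ℤ) ^ j * (j + d).choose j * (i + j).choose i) *
    (Even.neg_one_pow ⟨d, rfl⟩ : (-1 : ℤ) ^ (d + d) = 1)

/-- The Laguerre polynomial `L_n`, transported from `(0, ∞)` with weight `e^{-u}` to `(1, ∞)` with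
Lebesgue measure by `u = log r`. These functions are orthonormal in `L²(1, ∞)`, and `ell k n` is up
to sign the coefficient of `Δ_k(r) / r` along the `n`-th one. -/
noncomputable def logLaguerre (n : ℕ) (r : ℝ) : ℝ := laguerre n (Real.log r) / r

theorem measurable_logLaguerre (n : ℕ) : Measurable (logLaguerre n) := by
  unfold logLaguerre laguerre
  fun_prop

theorem log_pow_mul_inv_pow_mul_logLaguerre (i m n : ℕ) (r : ℝ) :
    Real.log r ^ i * r⁻¹ ^ (m + 1) * logLaguerre n r =
      ∑ j ∈ range (n + 1), (-1 : ℝ) ^ j * n.choose j / j.factorial *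
        (Real.log r ^ (i + j) * r⁻¹ ^ (m + 2)) := by
  rw [logLaguerre, laguerre, sum_div, mul_sum]
  exact sum_congr rfl fun j _ => by ring

theorem integrableOn_log_pow_mul_inv_pow_mul_logLaguerre (i m n : ℕ) :
    IntegrableOn (fun r : ℝ => Real.log r ^ i * r⁻¹ ^ (m + 1) * logLaguerre n r) (Set.Ioi 1) := by
  simp_rw [log_pow_mul_inv_pow_mul_logLaguerre]
  exact integrable_finsetSum _ fun j _ => (integrableOn_log_pow_mul_inv_pow (i + j) m).const_mul _

theorem integral_log_pow_mul_inv_pow_mul_logLaguerre (i m n : ℕ) :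
    ∫ r in Set.Ioi (1 : ℝ), Real.log r ^ i * r⁻¹ ^ (m + 1) * logLaguerre n r =
      i.factorial * ∑ j ∈ range (n + 1),
        (-1 : ℝ) ^ j * n.choose j * (i + j).choose i / ((m : ℝ) + 1) ^ (i + j + 1) := by
  simp_rw [log_pow_mul_inv_pow_mul_logLaguerre]
  rw [integral_finsetSum _ fun j _ => (integrableOn_log_pow_mul_inv_pow (i + j) m).const_mul _,
    mul_sum]
  refine sum_congr rfl fun j _ => ?_
  have hfact : ((i + j).factorial : ℝ) = (i + j).choose i * i.factorial * j.factorial := by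
    rw [Nat.choose_symm_add]
    exact_mod_cast (Nat.add_choose_mul_factorial_mul_factorial i j).symm
  rw [integral_const_mul, integral_log_pow_mul_inv_pow, hfact]
  field_simp

theorem integral_inv_pow_mul_logLaguerre (m n : ℕ) :
    ∫ r in Set.Ioi (1 : ℝ), r⁻¹ ^ (m + 1) * logLaguerre n r =
      1 / ((m : ℝ) + 1) * (1 - 1 / ((m : ℝ) + 1)) ^ n := by
  have h := integral_log_pow_mul_inv_pow_mul_logLaguerre 0 m n
  simp only [pow_zero, one_mul, zero_add, Nat.choose_zero_right, Nat.cast_one, mul_one,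
    Nat.factorial_zero] at h
  rw [h, show 1 - 1 / ((m : ℝ) + 1) = -(1 / ((m : ℝ) + 1)) + 1 by ring, add_pow, mul_sum]
  refine sum_congr rfl fun j _ => ?_
  rw [one_pow, neg_pow (1 / _), one_div_pow, pow_succ _ j]
  field_simp

theorem integral_log_pow_div_mul_logLaguerre {i n : ℕ} (h : i ≤ n) :
    ∫ r in Set.Ioi (1 : ℝ), Real.log r ^ i / r * logLaguerre n r =
      if i = n then (-1) ^ n * (n.factorial : ℝ) else 0 := by
  have hsum : ∑ j ∈ range (n + 1), (-1 : ℝ) ^ j * n.choose j * (i + j).choose i =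
      if i = n then (-1) ^ n else 0 := by
    exact_mod_cast sum_alternating_choose_mul_choose h
  have hint := integral_log_pow_mul_inv_pow_mul_logLaguerre i 0 n
  simp only [zero_add, pow_one, Nat.cast_zero, one_pow, div_one, hsum] at hint
  simp_rw [div_eq_mul_inv, hint]
  split_ifs with hin
  · rw [hin, mul_comm]
  · rw [mul_zero]

theorem logLaguerre_mul_logLaguerre (m n : ℕ) (r : ℝ) :
    logLaguerre m r * logLaguerre n r = ∑ i ∈ range (m + 1),
      (-1 : ℝ) ^ i * m.choose i / i.factorial * (Real.log r ^ i / r * logLaguerre n r) := by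
  rw [logLaguerre.eq_1 m, laguerre, sum_div, sum_mul]
  exact sum_congr rfl fun i _ => by ring

theorem integrableOn_log_pow_div_mul_logLaguerre (i n : ℕ) :
    IntegrableOn (fun r : ℝ => Real.log r ^ i / r * logLaguerre n r) (Set.Ioi 1) := by
  simpa [div_eq_mul_inv] using integrableOn_log_pow_mul_inv_pow_mul_logLaguerre i 0 n

theorem integrableOn_logLaguerre_mul_logLaguerre (m n : ℕ) :
    IntegrableOn (fun r => logLaguerre m r * logLaguerre n r) (Set.Ioi 1) := by
  simp_rw [logLaguerre_mul_logLaguerre]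
  exact integrable_finsetSum _ fun i _ =>
    (integrableOn_log_pow_div_mul_logLaguerre i n).const_mul _

theorem memLp_logLaguerre (n : ℕ) : MemLp (logLaguerre n) 2 (volume.restrict (Set.Ioi 1)) := by
  rw [memLp_two_iff_integrable_sq (measurable_logLaguerre n).aestronglyMeasurable]
  simpa only [pow_two, IntegrableOn] using integrableOn_logLaguerre_mul_logLaguerre n n

theorem integral_logLaguerre_mul_logLaguerre (m n : ℕ) :
    ∫ r in Set.Ioi (1 : ℝ), logLaguerre m r * logLaguerre n r = if m = n then 1 else 0 := by
  wlog hmn : m ≤ n generalizing m n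
  · simp_rw [mul_comm (logLaguerre m _), this n m (le_of_not_ge hmn), eq_comm]
  have hterm : ∀ i ∈ range (m + 1), ∫ r in Set.Ioi (1 : ℝ),
      (-1 : ℝ) ^ i * m.choose i / i.factorial * (Real.log r ^ i / r * logLaguerre n r) =
        if i = n then (m.choose n : ℝ) else 0 := by
    intro i hi
    have hin : i ≤ n := (mem_range_succ_iff.mp hi).trans hmn
    rw [integral_const_mul, integral_log_pow_div_mul_logLaguerre hin, mul_ite, mul_zero]
    refine if_ctx_congr Iff.rfl (fun hin => ?_) fun _ => rfl
    rw [hin]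
    field_simp
    rw [← pow_mul, Even.neg_one_pow ⟨n, mul_two n⟩, one_mul]
  simp_rw [logLaguerre_mul_logLaguerre]
  rw [integral_finsetSum _ fun i _ =>
    (integrableOn_log_pow_div_mul_logLaguerre i n).const_mul _, sum_congr rfl hterm, sum_ite_eq']
  rcases hmn.eq_or_lt with rfl | hlt
  · simp
  · simp [hlt.ne, Nat.choose_eq_zero_of_lt hlt]

theorem summable_norm_neg_pow_div_factorial_sq {y : ℝ} (hy : 0 ≤ y) :
    Summable fun m : ℕ => ‖(-y) ^ m / (m.factorial : ℝ) ^ 2‖ := by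
  refine .of_nonneg_of_le (fun m => norm_nonneg _) (fun m => ?_)
    (Real.summable_pow_div_factorial y)
  rw [norm_div, norm_pow, norm_neg, Real.norm_of_nonneg hy, Real.norm_of_nonneg (by positivity)]
  have : (1 : ℝ) ≤ m.factorial := by exact_mod_cast m.factorial_pos
  gcongr
  exact le_self_pow₀ this two_ne_zero

theorem besselJ0_two_mul_sqrt {y : ℝ} (hy : 0 ≤ y) :
    besselJ0 (2 * √y) = ∑' m : ℕ, (-y) ^ m / (m.factorial : ℝ) ^ 2 := by
  refine tsum_congr fun m => ?_
  rw [mul_div_cancel_left₀ _ two_ne_zero, pow_mul, Real.sq_sqrt hy, ← mul_pow, neg_one_mul]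

theorem sum_range_neg_pow_div_mul_pow_div (x u : ℝ) (n : ℕ) :
    ∑ j ∈ range (n + 1), (-(x * u)) ^ j / (j.factorial : ℝ) ^ 2 *
      (x ^ (n - j) / (n - j).factorial) = x ^ n / n.factorial * laguerre n u := by
  rw [laguerre, mul_sum]
  refine sum_congr rfl fun j hj => ?_
  obtain ⟨d, rfl⟩ := Nat.exists_eq_add_of_le (mem_range_succ_iff.mp hj)
  have hfact : ((j + d).factorial : ℝ) = (j + d).choose j * j.factorial * d.factorial := by
    rw [Nat.choose_symm_add]
    exact_mod_cast (Nat.add_choose_mul_factorial_mul_factorial j d).symm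
  have hchoose : ((j + d).choose j : ℝ) ≠ 0 := by
    exact_mod_cast (Nat.choose_pos (Nat.le_add_right j d)).ne'
  rw [hfact, Nat.add_sub_cancel_left, neg_pow (x * u), mul_pow, pow_add]
  field_simp

-- The generating function `∑ L_n(u) x^n / n! = e^x J₀(2√(xu))`.
theorem hasSum_poissonWeight_mul_laguerre {x u : ℝ} (hx : 0 ≤ x) (hu : 0 ≤ u) :
    HasSum (fun n : ℕ => poissonWeight n x * laguerre n u) (besselJ0 (2 * √(x * u))) := by
  have hxu : 0 ≤ x * u := mul_nonneg hx hu
  have hexp : ∑' n : ℕ, x ^ n / (n.factorial : ℝ) = Real.exp x := by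
    rw [Real.exp_eq_exp_ℝ, NormedSpace.exp_eq_tsum_div]
  have h := (hasSum_sum_range_mul_of_summable_norm
    (summable_norm_neg_pow_div_factorial_sq hxu)
    (Real.summable_pow_div_factorial x).norm).mul_left (Real.exp (-x))
  simp_rw [sum_range_neg_pow_div_mul_pow_div] at h
  rw [← besselJ0_two_mul_sqrt hxu, hexp, mul_left_comm, ← Real.exp_add,
    neg_add_cancel, Real.exp_zero, mul_one] at h
  simpa only [poissonWeight, mul_assoc] using h

/-! ### Moments of the divisor error term -/

theorem LSeriesHasSum_dk (k : ℕ) {s : ℂ} (hs : 1 < s.re) :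
    LSeriesHasSum (fun n => (dk k n : ℂ)) s (riemannZeta s ^ k) := by
  induction k with
  | zero =>
    have hterm : LSeries.term (fun n => (dk 0 n : ℂ)) s = fun n => if n = 1 then 1 else 0 := by
      have hdelta : (fun n => (dk 0 n : ℂ)) = LSeries.delta := by
        ext n
        simp [dk, ArithmeticFunction.one_apply, LSeries.delta]
      rw [hdelta]
      exact funext (LSeries.term_delta s)
    simpa only [LSeriesHasSum, hterm, pow_zero] using hasSum_ite_eq 1 (1 : ℂ)
  | succ k ih =>
    have h := ArithmeticFunction.LSeriesHasSum_mul
      (f := ((ArithmeticFunction.zeta ^ k : ArithmeticFunction ℕ) : ArithmeticFunction ℂ))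
      (g := (ArithmeticFunction.zeta : ArithmeticFunction ℂ)) (a := riemannZeta s ^ k)
      (b := riemannZeta s) (s := s) (by simpa [dk] using ih)
      (by simpa using ArithmeticFunction.LSeriesHasSum_zeta hs)
    rw [← ArithmeticFunction.natCoe_mul, ← pow_succ, ← pow_succ] at h
    simpa [dk] using h

theorem exists_sum_norm_le_of_lseriesSummable {f : ℕ → ℂ} {s : ℂ} (hs : 0 ≤ s.re)
    (hf : LSeriesSummable f s) :
    ∃ C, ∀ N : ℕ, ∑ n ∈ Icc 1 N, ‖f n‖ ≤ C * (N : ℝ) ^ s.re := by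
  refine ⟨∑' n, ‖LSeries.term f s n‖, fun N => ?_⟩
  calc ∑ n ∈ Icc 1 N, ‖f n‖ ≤ ∑ n ∈ Icc 1 N, ‖LSeries.term f s n‖ * (N : ℝ) ^ s.re := by
        refine sum_le_sum fun n hn => ?_
        obtain ⟨hn1, hnN⟩ := mem_Icc.mp hn
        have : (0 : ℝ) < n := by exact_mod_cast hn1
        rw [LSeries.norm_term_eq, if_neg (Nat.one_le_iff_ne_zero.mp hn1), div_mul_eq_mul_div,
          le_div_iff₀ (by positivity)]
        gcongr
    _ ≤ (∑' n, ‖LSeries.term f s n‖) * (N : ℝ) ^ s.re := by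
        rw [← sum_mul]
        gcongr
        exact hf.norm.sum_le_tsum (Icc 1 N) fun n _ => norm_nonneg _

theorem isBigO_sum_dk (k : ℕ) {σ : ℝ} (hσ : 1 < σ) :
    (fun N : ℕ => ∑ n ∈ Icc 1 N, (dk k n : ℝ)) =O[atTop] fun N => (N : ℝ) ^ σ := by
  obtain ⟨C, hC⟩ := exists_sum_norm_le_of_lseriesSummable (s := σ) (zero_lt_one.trans hσ).le
    (LSeriesHasSum_dk k hσ).LSeriesSummable
  refine IsBigO.of_bound C (.of_forall fun N => ?_)
  rw [Real.norm_of_nonneg (by positivity), Real.norm_of_nonneg (by positivity)]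
  simpa using hC N

theorem integral_sum_dk_mul_inv_pow (k m : ℕ) :
    ((∫ r in Set.Ioi (1 : ℝ), (∑ n ∈ Icc 1 ⌊r⌋₊, (dk k n : ℝ)) * r⁻¹ ^ (m + 3) : ℝ) : ℂ) =
      riemannZeta (m + 2) ^ k / (m + 2) := by
  have hre : ((m : ℂ) + 2).re = m + 2 := by simp
  have : (0 : ℝ) ≤ m := m.cast_nonneg
  have hne : (m : ℂ) + 2 ≠ 0 := ne_zero_of_re_pos (by linarith)
  have h := LSeries_eq_mul_integral_of_nonneg (fun n => (dk k n : ℝ)) (r := 3 / 2)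
    (s := (m : ℂ) + 2) (by norm_num) (by linarith) (isBigO_sum_dk k (by norm_num))
    fun n => by positivity
  simp only [ofReal_natCast, (LSeriesHasSum_dk k (s := m + 2) (by linarith)).LSeries_eq] at h
  rw [h, mul_div_cancel_left₀ _ hne, ← integral_complex_ofReal]
  refine setIntegral_congr_fun measurableSet_Ioi fun r _ => ?_
  push_cast
  rw [show -((m : ℂ) + 2 + 1) = -((m + 3 : ℕ) : ℂ) by push_cast; ring, cpow_neg, cpow_natCast,
    inv_pow]

theorem integrableOn_sum_dk_mul_inv_pow (k m : ℕ) :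
    IntegrableOn (fun r : ℝ => (∑ n ∈ Icc 1 ⌊r⌋₊, (dk k n : ℝ)) * r⁻¹ ^ (m + 3))
      (Set.Ioi 1) := by
  refine not_imp_comm.mp integral_undef ?_
  have hre : 1 < ((m : ℂ) + 2).re := by
    rw [add_re, natCast_re, re_ofNat]
    linarith [(m.cast_nonneg : (0 : ℝ) ≤ m)]
  rw [← ofReal_eq_zero, integral_sum_dk_mul_inv_pow]
  exact div_ne_zero (pow_ne_zero k (riemannZeta_ne_zero_of_one_lt_re hre))
    (ne_zero_of_re_pos (one_pos.trans hre))

theorem Deltak_div_mul_inv_pow (k m : ℕ) {r : ℝ} (hr : r ≠ 0) :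
    Deltak k r / r * r⁻¹ ^ (m + 2) = (∑ n ∈ Icc 1 ⌊r⌋₊, (dk k n : ℝ)) * r⁻¹ ^ (m + 3) -
      ∑ j ∈ range k, aCoef k j / j.factorial * (Real.log r ^ j * r⁻¹ ^ (m + 2)) := by
  rw [Deltak, sub_div, sub_mul, mul_div_cancel_left₀ _ hr, sum_mul]
  congr 1
  · ring
  · exact sum_congr rfl fun j _ => mul_assoc ..

theorem integrableOn_Deltak_div_mul_inv_pow (k m : ℕ) :
    IntegrableOn (fun r : ℝ => Deltak k r / r * r⁻¹ ^ (m + 2)) (Set.Ioi 1) :=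
  ((integrableOn_sum_dk_mul_inv_pow k m).sub (integrable_finsetSum (range k) fun j _ =>
    (integrableOn_log_pow_mul_inv_pow j m).const_mul _)).congr_fun
    (fun _ hr => (Deltak_div_mul_inv_pow k m (one_pos.trans hr).ne').symm) measurableSet_Ioi

theorem integral_Deltak_div_mul_inv_pow (k m : ℕ) :
    ((∫ r in Set.Ioi (1 : ℝ), Deltak k r / r * r⁻¹ ^ (m + 2) : ℝ) : ℂ) =
      (riemannZeta (m + 2) ^ k - polarPart k (m + 2)) / (m + 2) := by
  have hint := fun j (_ : j ∈ range k) =>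
    (integrableOn_log_pow_mul_inv_pow j m).const_mul (aCoef k j / j.factorial)
  have hpolar : polarPart k (m + 2) / (m + 2) =
      ∑ j ∈ range k, (aCoef k j : ℂ) / (m + 1) ^ (j + 1) := by
    have hne : (m : ℂ) + 2 ≠ 0 := mod_cast (m + 1).succ_ne_zero
    rw [polarPart, mul_div_cancel_left₀ _ hne, show (m : ℂ) + 2 - 1 = m + 1 by ring]
  rw [setIntegral_congr_fun measurableSet_Ioi
      fun r hr => Deltak_div_mul_inv_pow k m (one_pos.trans hr).ne',
    integral_sub (integrableOn_sum_dk_mul_inv_pow k m) (integrable_finsetSum (range k) hint),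
    integral_finsetSum _ hint, ofReal_sub, integral_sum_dk_mul_inv_pow, sub_div, hpolar,
    ofReal_sum]
  congr 1
  refine sum_congr rfl fun j _ => ?_
  have : (j.factorial : ℝ) ≠ 0 := by positivity
  rw [integral_const_mul, integral_log_pow_mul_inv_pow, div_mul_div_cancel₀ this]
  push_cast
  rfl

/-! ### Moment problems and orthonormal expansions -/

theorem exists_memLp_hasSum_integral {α ι : Type*} [MeasurableSpace α] {μ : Measure α}
    [DecidableEq ι] {e : ι → α → ℝ} (he : ∀ i, MemLp (e i) 2 μ)
    (ho : ∀ i j, ∫ x, e i x * e j x ∂μ = if i = j then 1 else 0)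
    {c : ι → ℝ} (hc : Summable fun i => c i ^ 2) :
    ∃ h : α → ℝ, MemLp h 2 μ ∧ ∀ q : α → ℝ, MemLp q 2 μ →
      HasSum (fun i => c i * ∫ x, e i x * q x ∂μ) (∫ x, h x * q x ∂μ) := by
  have hinner {f g : α → ℝ} (hf : MemLp f 2 μ) (hg : MemLp g 2 μ) :
      inner ℝ (hg.toLp g) (hf.toLp f) = ∫ x, f x * g x ∂μ := by
    rw [L2.inner_def]
    refine integral_congr_ae ?_
    filter_upwards [hf.coeFn_toLp, hg.coeFn_toLp] with x hfx hgx
    rw [hfx, hgx]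
    rfl
  have horth : Orthonormal ℝ fun i => (he i).toLp (e i) := by
    rw [orthonormal_iff_ite]
    intro i j
    simp_rw [hinner, ho, eq_comm]
  have hsum : Summable fun i => c i • (he i).toLp (e i) := by
    simpa using (horth.orthogonalFamily.summable_iff_norm_sq_summable c).mpr (by simpa using hc)
  refine ⟨(∑' i, c i • (he i).toLp (e i) : Lp ℝ 2 μ), Lp.memLp _, fun q hq => ?_⟩
  have h := hsum.hasSum.mapL (innerSL ℝ (hq.toLp q))
  simp only [innerSL_apply_apply, inner_smul_right, hinner] at h
  rwa [← hinner (Lp.memLp _) hq, Lp.toLp_coeFn]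

section Moments

variable {α : Type*} [MeasurableSpace α] {μ : Measure α} {a b : ℝ} {φ p : α → ℝ}

theorem integrable_pow_mul_of_mem_Icc (hφm : AEStronglyMeasurable φ μ)
    (hφ : ∀ᵐ x ∂μ, φ x ∈ Set.Icc a b) (hp : Integrable p μ) (m : ℕ) :
    Integrable (fun x => φ x ^ m * p x) μ := by
  refine hp.bdd_mul (c := max |a| |b| ^ m) (hφm.pow m) ?_
  filter_upwards [hφ] with x hx
  rw [norm_pow, Real.norm_eq_abs]
  gcongr
  exact abs_le_max_abs_abs hx.1 hx.2

-- By the Weierstrass approximation theorem.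
theorem integral_comp_mul_eq_zero_of_integral_pow_mul_eq_zero (hφm : AEStronglyMeasurable φ μ)
    (hφ : ∀ᵐ x ∂μ, φ x ∈ Set.Icc a b) (hp : Integrable p μ)
    (h : ∀ m : ℕ, ∫ x, φ x ^ m * p x ∂μ = 0) {G : ℝ → ℝ} (hG : ContinuousOn G (Set.Icc a b)) :
    ∫ x, G (φ x) * p x ∂μ = 0 := by
  by_cases hint : Integrable (fun x => G (φ x) * p x) μ
  swap
  · exact integral_undef hint
  have hpow := integrable_pow_mul_of_mem_Icc hφm hφ hp
  have heval (P : Polynomial ℝ) (x : α) : P.eval (φ x) * p x =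
      ∑ m ∈ range (P.natDegree + 1), P.coeff m * (φ x ^ m * p x) := by
    simp_rw [Polynomial.eval_eq_sum_range, sum_mul, mul_assoc]
  have hPint (P : Polynomial ℝ) : Integrable (fun x => P.eval (φ x) * p x) μ := by
    simp_rw [heval]
    exact integrable_finsetSum _ fun m _ => (hpow m).const_mul _
  have hP0 (P : Polynomial ℝ) : ∫ x, P.eval (φ x) * p x ∂μ = 0 := by
    simp_rw [heval]
    rw [integral_finsetSum _ fun m _ => (hpow m).const_mul _]
    simp_rw [integral_const_mul, h, mul_zero, sum_const_zero]
  have hbound : ∀ ε > 0, ‖∫ x, G (φ x) * p x ∂μ‖ ≤ ε * ∫ x, ‖p x‖ ∂μ := by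
    intro ε hε
    obtain ⟨P, hP⟩ := exists_polynomial_near_of_continuousOn a b G hG ε hε
    rw [← sub_zero (∫ x, G (φ x) * p x ∂μ), ← hP0 P, ← integral_sub hint (hPint P),
      ← integral_const_mul]
    refine norm_integral_le_of_norm_le (hp.norm.const_mul ε) ?_
    filter_upwards [hφ] with x hx
    rw [← sub_mul, norm_mul, norm_sub_rev]
    gcongr
    exact (hP (φ x) hx).le
  have hlim : Tendsto (fun ε => ε * ∫ x, ‖p x‖ ∂μ) (𝓝[>] 0) (𝓝 0) :=
    ((continuous_mul_const _).tendsto' 0 0 (zero_mul _)).mono_left nhdsWithin_le_nhds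
  exact norm_le_zero_iff.mp (ge_of_tendsto hlim (eventually_mem_nhdsWithin.mono hbound))

end Moments

theorem continuous_comp_inv_of_hasCompactSupport {𝕜 E : Type*} [NormedField 𝕜] [ProperSpace 𝕜]
    [TopologicalSpace E] [Zero E] {g : 𝕜 → E} (hg : Continuous g) (hgc : HasCompactSupport g)
    (hg0 : g 0 = 0) : Continuous fun y => g y⁻¹ := by
  rw [continuous_iff_continuousAt]
  intro y
  rcases eq_or_ne y 0 with rfl | hy
  · have hzero : g =ᶠ[Bornology.cobounded 𝕜] 0 := by
      rw [Metric.cobounded_eq_cocompact, ← coclosedCompact_eq_cocompact]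
      exact hasCompactSupport_iff_eventuallyEq.mp hgc
    rw [continuousAt_iff_punctured_nhds, inv_zero, hg0]
    exact tendsto_const_nhds.congr' (tendsto_inv₀_nhdsNE_zero.eventually hzero.symm)
  · exact hg.continuousAt.comp (continuousAt_inv₀ hy)

section InvMoments

variable {a : ℝ}

theorem ae_inv_mem_Icc_of_pos (ha : 0 < a) :
    ∀ᵐ r ∂volume.restrict (Set.Ioi a), r⁻¹ ∈ Set.Icc 0 a⁻¹ := by
  filter_upwards [ae_restrict_mem measurableSet_Ioi] with r hr
  exact ⟨inv_nonneg.mpr (ha.trans hr).le, inv_anti₀ ha (le_of_lt hr)⟩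

theorem ae_eq_zero_of_integral_inv_pow_mul_eq_zero (ha : 0 < a) {p : ℝ → ℝ}
    (hp : IntegrableOn p (Set.Ioi a)) (h : ∀ m : ℕ, ∫ r in Set.Ioi a, r⁻¹ ^ m * p r = 0) :
    p =ᵐ[volume.restrict (Set.Ioi a)] 0 := by
  rw [Filter.EventuallyEq, ae_restrict_iff' measurableSet_Ioi]
  refine isOpen_Ioi.ae_eq_zero_of_integral_contDiff_smul_eq_zero hp.locallyIntegrableOn ?_
  intro g hg hgc hgs
  have hg0 : ∀ r ∉ Set.Ioi a, g r = 0 := fun r hr =>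
    image_eq_zero_of_notMem_tsupport fun hmem => hr (hgs hmem)
  have hcont : Continuous fun y => g y⁻¹ :=
    continuous_comp_inv_of_hasCompactSupport hg.continuous hgc (hg0 0 ha.not_gt)
  rw [← setIntegral_eq_integral_of_forall_compl_eq_zero fun r hr => by rw [hg0 r hr, zero_smul]]
  simpa using integral_comp_mul_eq_zero_of_integral_pow_mul_eq_zero (by fun_prop)
    (ae_inv_mem_Icc_of_pos ha) hp h hcont.continuousOn

theorem ae_eq_of_integral_mul_inv_pow_eq (ha : 0 < a) {f g : ℝ → ℝ} {d : ℕ}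
    (hf : IntegrableOn (fun r => f r * r⁻¹ ^ d) (Set.Ioi a))
    (hg : IntegrableOn (fun r => g r * r⁻¹ ^ d) (Set.Ioi a))
    (h : ∀ m : ℕ, ∫ r in Set.Ioi a, f r * r⁻¹ ^ (m + d) = ∫ r in Set.Ioi a, g r * r⁻¹ ^ (m + d)) :
    f =ᵐ[volume.restrict (Set.Ioi a)] g := by
  have hmoment (F : ℝ → ℝ) (m : ℕ) (r : ℝ) : r⁻¹ ^ m * (F r * r⁻¹ ^ d) = F r * r⁻¹ ^ (m + d) := by
    rw [pow_add, mul_left_comm]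
  have hint {F : ℝ → ℝ} (hF : IntegrableOn (fun r => F r * r⁻¹ ^ d) (Set.Ioi a)) (m : ℕ) :
      IntegrableOn (fun r => F r * r⁻¹ ^ (m + d)) (Set.Ioi a) := by
    simpa only [hmoment, IntegrableOn] using
      integrable_pow_mul_of_mem_Icc (by fun_prop) (ae_inv_mem_Icc_of_pos ha) hF m
  have hzero := ae_eq_zero_of_integral_inv_pow_mul_eq_zero ha (hf.sub hg) fun m => by
    simp only [Pi.sub_apply, mul_sub, hmoment]
    rw [integral_sub (hint hf m) (hint hg m), h, sub_self]
  filter_upwards [hzero, ae_restrict_mem measurableSet_Ioi] with r hr hra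
  have hpow : r⁻¹ ^ d ≠ 0 := pow_ne_zero d (inv_ne_zero (ha.trans hra).ne')
  exact mul_right_cancel₀ hpow (sub_eq_zero.mp hr)

end InvMoments

/-! ### The Laguerre expansion of `Δ_k` -/

theorem memLp_inv_pow (m : ℕ) :
    MemLp (fun r : ℝ => r⁻¹ ^ (m + 1)) 2 (volume.restrict (Set.Ioi 1)) := by
  rw [memLp_two_iff_integrable_sq (by fun_prop)]
  have h := integrableOn_log_pow_mul_inv_pow 0 (2 * m)
  simpa only [pow_zero, one_mul, ← pow_mul, add_mul, mul_comm m, IntegrableOn] using h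

theorem hasSum_ell_mul_integral_logLaguerre {k : ℕ} (hk : 0 < k) (m : ℕ) :
    HasSum (fun n : ℕ => (-1 : ℝ) ^ n * ell k n *
      ∫ r in Set.Ioi (1 : ℝ), logLaguerre n r * r⁻¹ ^ (m + 2))
      (∫ r in Set.Ioi (1 : ℝ), Deltak k r / r * r⁻¹ ^ (m + 2)) := by
  have hs : (m : ℂ) + 2 ≠ 0 := mod_cast (m + 1).succ_ne_zero
  have hs1 : (m : ℂ) + 2 ≠ 1 := mod_cast (show m + 2 ≠ 1 by omega)
  have hre : (1 : ℝ) / 2 < ((m : ℂ) + 2).re := by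
    rw [add_re, natCast_re, re_ofNat]
    linarith [(m.cast_nonneg : (0 : ℝ) ≤ m)]
  rw [← hasSum_ofReal, integral_Deltak_div_mul_inv_pow]
  refine ((hasSum_ell hk hre hs1).div_const _).congr_fun fun n => ?_
  simp_rw [mul_comm (logLaguerre n _), integral_inv_pow_mul_logLaguerre (m + 1) n]
  push_cast
  rw [add_assoc, one_add_one_eq_two,
    show (1 - ((m : ℂ) + 2)) / (m + 2) = -1 * (1 - 1 / (m + 2)) by field_simp; ring, mul_pow]
  ring

theorem summable_sq_neg_one_pow_mul {a : ℕ → ℝ} (ha : Summable fun n => a n ^ 2) :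
    Summable fun n => ((-1 : ℝ) ^ n * a n) ^ 2 := by
  simpa only [mul_pow, pow_right_comm _ _ 2, neg_one_sq, one_pow, one_mul] using ha

theorem memLp_Deltak_div_and_hasSum_integral {k : ℕ} (hk : 0 < k)
    (hsum : Summable fun n : ℕ => ell k n ^ 2) :
    MemLp (fun r => Deltak k r / r) 2 (volume.restrict (Set.Ioi 1)) ∧
      ∀ q : ℝ → ℝ, MemLp q 2 (volume.restrict (Set.Ioi 1)) →
        HasSum (fun n : ℕ => (-1 : ℝ) ^ n * ell k n * ∫ r in Set.Ioi 1, logLaguerre n r * q r)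
          (∫ r in Set.Ioi 1, Deltak k r / r * q r) := by
  obtain ⟨h, hh, hq⟩ := exists_memLp_hasSum_integral memLp_logLaguerre
    integral_logLaguerre_mul_logLaguerre (summable_sq_neg_one_pow_mul hsum)
  -- `h` and `Δ_k(r) / r` have the same moments against `r⁻ᵐ`, hence agree almost everywhere.
  have hae : h =ᵐ[volume.restrict (Set.Ioi 1)] fun r => Deltak k r / r :=
    ae_eq_of_integral_mul_inv_pow_eq one_pos (d := 2) (hh.integrable_mul (memLp_inv_pow 1))
      (integrableOn_Deltak_div_mul_inv_pow k 0) fun m =>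
        (hq _ (memLp_inv_pow (m + 1))).unique (hasSum_ell_mul_integral_logLaguerre hk m)
  refine ⟨hh.ae_eq hae, fun q hqL => ?_⟩
  have hint : ∫ r in Set.Ioi 1, h r * q r = ∫ r in Set.Ioi 1, Deltak k r / r * q r :=
    integral_congr_ae (hae.mul (.refl _ q))
  exact hint ▸ hq q hqL

theorem integral_Deltak_div_mul_logLaguerre {k : ℕ} (hk : 0 < k)
    (hsum : Summable fun n : ℕ => ell k n ^ 2) (n : ℕ) :
    ∫ r in Set.Ioi (1 : ℝ), Deltak k r / r * logLaguerre n r = (-1 : ℝ) ^ n * ell k n := by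
  have h := (memLp_Deltak_div_and_hasSum_integral hk hsum).2 _ (memLp_logLaguerre n)
  simp only [integral_logLaguerre_mul_logLaguerre, mul_ite, mul_one, mul_zero] at h
  rw [← h.tsum_eq, tsum_ite_eq]

theorem hasSum_mul_integral_mul {α ι : Type*} [Countable ι] [MeasurableSpace α] {μ : Measure α}
    {f : α → ℝ} {e : ι → α → ℝ} {w : ι → ℝ} {C : ℝ} (hf : MemLp f 2 μ)
    (he : ∀ i, MemLp (e i) 2 μ) (heC : ∀ i, ∫ x, e i x ^ 2 ∂μ ≤ C) (hw : Summable w) :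
    HasSum (fun i => w i * ∫ x, f x * e i x ∂μ) (∫ x, ∑' i, w i * (f x * e i x) ∂μ) := by
  have hint : ∀ i, Integrable (fun x => f x * e i x) μ := fun i => hf.integrable_mul (he i)
  have hnorm (i : ι) : ∫ x, ‖w i * (f x * e i x)‖ ∂μ ≤ |w i| * ((∫ x, f x ^ 2 ∂μ) + C) := by
    calc ∫ x, ‖w i * (f x * e i x)‖ ∂μ ≤ ∫ x, |w i| * (f x ^ 2 + e i x ^ 2) ∂μ := by
          refine integral_mono ((hint i).const_mul _).norm
            ((hf.integrable_sq.add (he i).integrable_sq).const_mul _) fun x => ?_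
          simp only [norm_mul, Real.norm_eq_abs, ← sq_abs (f x), ← sq_abs (e i x)]
          gcongr
          nlinarith [sq_nonneg (|f x| - |e i x|), sq_nonneg |f x|, sq_nonneg |e i x|]
      _ ≤ |w i| * ((∫ x, f x ^ 2 ∂μ) + C) := by
          rw [integral_const_mul, integral_add hf.integrable_sq (he i).integrable_sq]
          gcongr
          exact heC i
  have h := hasSum_integral_of_summable_integral_norm (fun i => (hint i).const_mul (w i))
    (.of_nonneg_of_le (fun i => integral_nonneg fun x => norm_nonneg _) hnorm
      (hw.abs.mul_right _))
  simpa only [integral_const_mul] using h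

theorem hasSum_poissonWeight (x : ℝ) : HasSum (fun n => poissonWeight n x) 1 := by
  have h := (NormedSpace.expSeries_div_hasSum_exp x).mul_left (Real.exp (-x))
  rwa [← Real.exp_eq_exp_ℝ, ← Real.exp_add, neg_add_cancel, Real.exp_zero] at h

theorem hasSum_poissonWeight_mul_ell {k : ℕ} (hk : 0 < k)
    (hsum : Summable fun n : ℕ => ell k n ^ 2) {x : ℝ} (hx : 0 ≤ x) :
    HasSum (fun n : ℕ => poissonWeight n x * ((-1 : ℝ) ^ n * ell k n)) (phik k x) := by
  have hD := (memLp_Deltak_div_and_hasSum_integral hk hsum).1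
  have hnorm (n : ℕ) : ∫ r in Set.Ioi (1 : ℝ), logLaguerre n r ^ 2 ≤ 1 := by
    simp [pow_two, integral_logLaguerre_mul_logLaguerre]
  have h := hasSum_mul_integral_mul hD memLp_logLaguerre hnorm (hasSum_poissonWeight x).summable
  simp only [integral_Deltak_div_mul_logLaguerre hk hsum] at h
  convert! h using 1
  refine setIntegral_congr_fun measurableSet_Ioi fun r hr => ?_
  have hbessel := hasSum_poissonWeight_mul_laguerre hx (Real.log_nonneg (le_of_lt hr))
  rw [mul_div_right_comm, ← (hbessel.mul_left (Deltak k r / r ^ 2)).tsum_eq]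
  refine tsum_congr fun n => ?_
  rw [logLaguerre]
  ring

/-! ### Square-integrable Poisson means -/

theorem ofReal_sq_le_tsum_of_hasSum_mul {ι : Type*} {w c : ι → ℝ} {d : ℝ} (hw : ∀ i, 0 ≤ w i)
    (hw1 : ∀ s : Finset ι, ∑ i ∈ s, w i ≤ 1) (hd : HasSum (fun i => w i * c i) d) :
    ENNReal.ofReal (d ^ 2) ≤ ∑' i, ENNReal.ofReal (c i ^ 2) * ENNReal.ofReal (w i) := by
  refine le_of_tendsto ((ENNReal.continuous_ofReal.tendsto _).comp (hd.pow 2))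
    (.of_forall fun s => ?_)
  have hcauchy : (∑ i ∈ s, w i * c i) ^ 2 ≤ (∑ i ∈ s, w i) * ∑ i ∈ s, c i ^ 2 * w i :=
    sum_sq_le_sum_mul_sum_of_sq_le_mul s (fun i _ => hw i)
      (fun i _ => mul_nonneg (sq_nonneg _) (hw i)) fun i _ => by
        rw [mul_pow, sq (w i), mul_assoc, mul_comm (c i ^ 2)]
  have hnonneg (i : ι) : 0 ≤ c i ^ 2 * w i := mul_nonneg (sq_nonneg _) (hw i)
  calc ENNReal.ofReal ((∑ i ∈ s, w i * c i) ^ 2) ≤ ENNReal.ofReal (∑ i ∈ s, c i ^ 2 * w i) :=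
        ENNReal.ofReal_le_ofReal (hcauchy.trans
          (mul_le_of_le_one_left (sum_nonneg fun i _ => hnonneg i) (hw1 s)))
    _ = ∑ i ∈ s, ENNReal.ofReal (c i ^ 2) * ENNReal.ofReal (w i) := by
        rw [ENNReal.ofReal_sum_of_nonneg fun i _ => hnonneg i]
        exact sum_congr rfl fun i _ => ENNReal.ofReal_mul (sq_nonneg _)
    _ ≤ ∑' i, ENNReal.ofReal (c i ^ 2) * ENNReal.ofReal (w i) := ENNReal.sum_le_tsum s

section SubprobabilityWeights

variable {α ι : Type*} [Countable ι] [MeasurableSpace α] {μ : Measure α} {w : ι → α → ℝ}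
  {c : ι → ℝ} {f : α → ℝ}

theorem aestronglyMeasurable_of_hasSum_mul (hwm : ∀ i, AEStronglyMeasurable (w i) μ)
    (hf : ∀ᵐ x ∂μ, HasSum (fun i => w i x * c i) (f x)) : AEStronglyMeasurable f μ :=
  aestronglyMeasurable_of_tendsto_ae atTop
    (fun s => Finset.aestronglyMeasurable_fun_sum s fun i _ => (hwm i).mul_const (c i)) hf

theorem lintegral_sq_le_of_hasSum_mul (hwm : ∀ i, AEStronglyMeasurable (w i) μ)
    (hw : ∀ᵐ x ∂μ, ∀ i, 0 ≤ w i x) (hw1 : ∀ᵐ x ∂μ, ∀ s : Finset ι, ∑ i ∈ s, w i x ≤ 1)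
    (hwint : ∀ i, ∫⁻ x, ENNReal.ofReal (w i x) ∂μ ≤ 1) (hc : Summable fun i => c i ^ 2)
    (hf : ∀ᵐ x ∂μ, HasSum (fun i => w i x * c i) (f x)) :
    ∫⁻ x, ENNReal.ofReal (f x ^ 2) ∂μ ≤ ENNReal.ofReal (∑' i, c i ^ 2) := by
  calc ∫⁻ x, ENNReal.ofReal (f x ^ 2) ∂μ
      ≤ ∫⁻ x, ∑' i, ENNReal.ofReal (c i ^ 2) * ENNReal.ofReal (w i x) ∂μ := by
        refine lintegral_mono_ae ?_
        filter_upwards [hw, hw1, hf] with x hx hx1 hfx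
        exact ofReal_sq_le_tsum_of_hasSum_mul hx hx1 hfx
    _ = ∑' i, ENNReal.ofReal (c i ^ 2) * ∫⁻ x, ENNReal.ofReal (w i x) ∂μ := by
        rw [lintegral_tsum fun i => ((hwm i).aemeasurable.ennreal_ofReal).const_mul _]
        simp_rw [lintegral_const_mul' _ _ ENNReal.ofReal_ne_top]
    _ ≤ ∑' i, ENNReal.ofReal (c i ^ 2) := by
        gcongr with i
        exact mul_le_of_le_one_right' (hwint i)
    _ = ENNReal.ofReal (∑' i, c i ^ 2) :=
        (ENNReal.ofReal_tsum_of_nonneg (fun i => sq_nonneg _) hc).symm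

theorem integrable_sq_and_integral_sq_le_of_hasSum_mul (hwm : ∀ i, AEStronglyMeasurable (w i) μ)
    (hw : ∀ᵐ x ∂μ, ∀ i, 0 ≤ w i x) (hw1 : ∀ᵐ x ∂μ, ∀ s : Finset ι, ∑ i ∈ s, w i x ≤ 1)
    (hwint : ∀ i, ∫⁻ x, ENNReal.ofReal (w i x) ∂μ ≤ 1) (hc : Summable fun i => c i ^ 2)
    (hf : ∀ᵐ x ∂μ, HasSum (fun i => w i x * c i) (f x)) :
    Integrable (fun x => f x ^ 2) μ ∧ ∫ x, f x ^ 2 ∂μ ≤ ∑' i, c i ^ 2 := by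
  have hfm : AEStronglyMeasurable (fun x => f x ^ 2) μ :=
    (aestronglyMeasurable_of_hasSum_mul hwm hf).pow 2
  have hle := lintegral_sq_le_of_hasSum_mul hwm hw hw1 hwint hc hf
  have hnonneg : 0 ≤ᵐ[μ] fun x => f x ^ 2 := .of_forall fun x => sq_nonneg _
  refine ⟨⟨hfm, ?_⟩, ?_⟩
  · rw [hasFiniteIntegral_iff_ofReal hnonneg]
    exact hle.trans_lt ENNReal.ofReal_lt_top
  · rw [integral_eq_lintegral_of_nonneg_ae hnonneg hfm]
    exact ENNReal.toReal_le_of_le_ofReal (tsum_nonneg fun i => sq_nonneg _) hle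

end SubprobabilityWeights

theorem continuous_poissonWeight (n : ℕ) : Continuous (poissonWeight n) := by
  unfold poissonWeight
  fun_prop

theorem poissonWeight_nonneg (n : ℕ) {x : ℝ} (hx : 0 ≤ x) : 0 ≤ poissonWeight n x := by
  unfold poissonWeight
  positivity

theorem integral_poissonWeight (n : ℕ) : ∫ x in Set.Ioi (0 : ℝ), poissonWeight n x = 1 := by
  have hgamma := Real.Gamma_eq_integral (s := (n : ℝ) + 1) (by positivity)
  simp_rw [Real.Gamma_nat_eq_factorial, add_sub_cancel_right, Real.rpow_natCast] at hgamma
  simp_rw [poissonWeight, ← mul_div_assoc]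
  rw [integral_div, ← hgamma, div_self (by positivity)]

theorem lintegral_poissonWeight (n : ℕ) :
    ∫⁻ x in Set.Ioi (0 : ℝ), ENNReal.ofReal (poissonWeight n x) = 1 := by
  have hint : IntegrableOn (poissonWeight n) (Set.Ioi 0) :=
    not_imp_comm.mp integral_undef (integral_poissonWeight n ▸ one_ne_zero)
  rw [← ofReal_integral_eq_lintegral_ofReal hint, integral_poissonWeight, ENNReal.ofReal_one]
  filter_upwards [ae_restrict_mem measurableSet_Ioi] with x hx
  exact poissonWeight_nonneg n (le_of_lt hx)

theorem integrableOn_and_integral_sq_sub_sum_poissonWeight_le {f : ℝ → ℝ} {c : ℕ → ℝ}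
    (hc : Summable fun n => c n ^ 2)
    (hf : ∀ x : ℝ, 0 < x → HasSum (fun n => poissonWeight n x * c n) (f x)) (N : ℕ) :
    IntegrableOn (fun x => (f x - ∑ n ∈ range N, c n * poissonWeight n x) ^ 2) (Set.Ioi 0) ∧
      ∫ x in Set.Ioi (0 : ℝ), (f x - ∑ n ∈ range N, c n * poissonWeight n x) ^ 2 ≤
        ∑' n, c (n + N) ^ 2 := by
  refine integrable_sq_and_integral_sq_le_of_hasSum_mul (c := fun n => c (n + N))
    (w := fun n x => poissonWeight (n + N) x)
    (fun n => (continuous_poissonWeight _).aestronglyMeasurable) ?_ ?_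
    (fun n => (lintegral_poissonWeight _).le) ((summable_nat_add_iff N).mpr hc) ?_
  all_goals filter_upwards [ae_restrict_mem measurableSet_Ioi] with x hx
  · exact fun n => poissonWeight_nonneg _ (le_of_lt hx)
  · intro s
    simpa only [sum_map, addRightEmbedding_apply] using sum_le_hasSum (s.map (addRightEmbedding N))
      (fun n _ => poissonWeight_nonneg n (le_of_lt hx)) (hasSum_poissonWeight x)
  · simpa only [mul_comm] using (hasSum_nat_add_iff' N).mpr (hf x hx)

theorem exp_neg_mul_sum_eq_sum_mul_poissonWeight (c : ℕ → ℝ) (N : ℕ) (x : ℝ) :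
    Real.exp (-x) * ∑ n ∈ range N, c n * x ^ n / n.factorial =
      ∑ n ∈ range N, c n * poissonWeight n x := by
  rw [mul_sum]
  exact sum_congr rfl fun n _ => by rw [poissonWeight, mul_div_assoc, mul_left_comm]

theorem stmt6 :
    LindelofHypothesis ↔ ∀ k : ℕ, 0 < k →
      (∀ N : ℕ, IntegrableOn (fun x : ℝ =>
          (phik k x - Real.exp (-x) * ∑ n ∈ Finset.range (N + 1),
            (-1 : ℝ) ^ n * ell k n * x ^ n / (Nat.factorial n)) ^ 2) (Set.Ioi 0)) ∧
      Tendsto (fun N : ℕ => ∫ x in Set.Ioi (0 : ℝ),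
          (phik k x - Real.exp (-x) * ∑ n ∈ Finset.range (N + 1),
            (-1 : ℝ) ^ n * ell k n * x ^ n / (Nat.factorial n)) ^ 2) atTop (𝓝 0) := by
  simp_rw [exp_neg_mul_sum_eq_sum_mul_poissonWeight]
  constructor
  · intro hL k hk
    have hsum := hL.summable_ell_sq hk
    have hbound := integrableOn_and_integral_sq_sub_sum_poissonWeight_le
      (summable_sq_neg_one_pow_mul hsum) fun x hx => hasSum_poissonWeight_mul_ell hk hsum hx.le
    have htail := (tendsto_sum_nat_add fun n : ℕ => ((-1 : ℝ) ^ n * ell k n) ^ 2).comp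
      (tendsto_add_atTop_nat 1)
    exact ⟨fun N => (hbound (N + 1)).1, squeeze_zero (fun N => integral_nonneg fun x => sq_nonneg _)
      (fun N => (hbound (N + 1)).2) htail⟩
  · intro h
    refine lindelofHypothesis_of_abs_ell_le fun k hk => ?_
    obtain ⟨C, hC⟩ := exists_abs_le_of_tendsto_integral_sq_sub_sum (h k hk).1 (h k hk).2
    exact ⟨C, fun n => by simpa [abs_mul, abs_pow] using hC n⟩
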